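/- arXiv:1512.08227 — 8 statements merged into one kernel-verified Lean document; each statement's English description precedes it below -/
import Mathlib

section
/- Let f : ℝ → ℝ be a positive 2π-periodic C¹ function with ∫₀^{2π} f(θ)cos θ dθ = 0 and ∫₀^{2π} f(θ)sin θ dθ = 0. Then for every 2π-periodic C¹ function φ : ℝ → ℝ satisfying ∫₀^{2π} f(θ)φ(θ) dθ = 0, one has ∫₀^{2π} φ(θ)² dθ ≤ ∫₀^{2π} (φ'(θ))² dθ. -/
open Real

/-!
Let `h` solve `h'' + h = f` with `h(0) = h'(0) = 0`. Orthogonality of `f` to `cos` and `sin` says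
exactly that also `h(2π) = h'(2π) = 0`, and it makes `h` nonnegative: Duhamel's formula writes
`h(x)` as the integral of `f(θ) sin (x - θ)` over `[0, x]`, hence also as that of `f(θ) sin (θ - x)`
over `[x, 2π]`, and one of the two kernels is nonnegative.

For `Q(u) = ∫ u'² - ∫ u²`, integration by parts gives `Q(φ + t h) = Q(φ) - 2 t ∫ f φ - t² ∫ f h`,
so `Q(φ) ≥ Q(φ + t h)` for every `t` when `∫ f φ = 0`. As `∫ h = ∫ f > 0`, some `t` makes the mean
of `φ + t h` vanish, and then `Q(φ + t h) ≥ 0` is Wirtinger's inequality.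
-/

open MeasureTheory Set

section SquareIntegrable

variable {X : Type*} [MeasurableSpace X] {μ : Measure X}

lemma memLp_restrict_of_continuousOn_isCompact [TopologicalSpace X] [OpensMeasurableSpace X]
    [TopologicalSpace.PseudoMetrizableSpace X] [IsFiniteMeasureOnCompacts μ]
    {E : Type*} [NormedAddCommGroup E] {u : X → E} {K : Set X} (hu : ContinuousOn u K)
    (hK : IsCompact K) (hKm : MeasurableSet K) (p : ENNReal) : MemLp u p (μ.restrict K) := by
  obtain ⟨C, hC⟩ := hK.exists_bound_of_continuousOn hu
  have : IsFiniteMeasure (μ.restrict K) := isFiniteMeasure_restrict.2 hK.measure_ne_top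
  exact .of_bound (hu.aestronglyMeasurable_of_isCompact hK hKm) C
    ((ae_restrict_iff' hKm).2 (.of_forall hC))

lemma memLp_restrict_Ioc_of_continuousOn_Icc {E : Type*} [NormedAddCommGroup E] {u : ℝ → E}
    {a b : ℝ} (hu : ContinuousOn u (Icc a b)) (p : ENNReal) :
    MemLp u p (volume.restrict (Ioc a b)) :=
  (memLp_restrict_of_continuousOn_isCompact hu isCompact_Icc measurableSet_Icc p).mono_measure
    (Measure.restrict_mono Ioc_subset_Icc_self le_rfl)

lemma integral_add_mul_sq {p q : X → ℝ} (hp : MemLp p 2 μ) (hq : MemLp q 2 μ) (t : ℝ) :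
    ∫ x, (p x + t * q x) ^ 2 ∂μ =
      ∫ x, p x ^ 2 ∂μ + 2 * t * ∫ x, q x * p x ∂μ + t ^ 2 * ∫ x, q x * q x ∂μ := by
  have hqp : Integrable (fun x ↦ q x * p x) μ := hq.integrable_mul hp
  have hqq : Integrable (fun x ↦ q x * q x) μ := hq.integrable_mul hq
  have hsum : Integrable (fun x ↦ p x ^ 2 + 2 * t * (q x * p x)) μ :=
    hp.integrable_sq.add (hqp.const_mul _)
  rw [← integral_const_mul, ← integral_const_mul,
    ← integral_add hp.integrable_sq (hqp.const_mul _), ← integral_add hsum (hqq.const_mul _)]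
  congr 1 with x
  ring

end SquareIntegrable

section Wirtinger

variable {a b : ℝ}

lemma norm_fourierCoeffOn_eq_of_hasDerivAt (hab : a < b) {u u' : ℝ → ℂ} {n : ℤ} (hn : n ≠ 0)
    (hu : ContinuousOn u (Icc a b)) (huu' : ∀ x ∈ Ioo a b, HasDerivAt u (u' x) x)
    (hu' : IntervalIntegrable u' volume a b) (hper : u b = u a) :
    ‖fourierCoeffOn hab u n‖ = (b - a) / (2 * π) / |(n : ℝ)| * ‖fourierCoeffOn hab u' n‖ := by
  have hlen : ‖(b : ℂ) - a‖ = b - a := by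
    rw [← Complex.ofReal_sub, Complex.norm_real, norm_of_nonneg (sub_nonneg.2 hab.le)]
  rw [fourierCoeffOn_of_hasDerivAt_Ioo hab hn (by rwa [uIcc_of_le hab.le])
    (by rwa [min_eq_left hab.le, max_eq_right hab.le]) hu', hper]
  simp only [sub_self, mul_zero, zero_sub, norm_mul, norm_neg, norm_div, norm_one, hlen,
    Complex.norm_I, Complex.norm_ofNat, Complex.norm_real, Complex.norm_intCast,
    norm_of_nonneg pi_pos.le, mul_one]
  ring

lemma fourierCoeffOn_zero_of_integral_eq_zero (hab : a < b) {u : ℝ → ℂ}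
    (hmean : ∫ x in a..b, u x = 0) : fourierCoeffOn hab u 0 = 0 := by
  simp [fourierCoeffOn_eq_integral, hmean]

theorem wirtinger_inequality (hab : a < b) {u u' : ℝ → ℂ}
    (hu : ContinuousOn u (Icc a b)) (huu' : ∀ x ∈ Ioo a b, HasDerivAt u (u' x) x)
    (hu' : MemLp u' 2 (volume.restrict (Ioc a b))) (hper : u b = u a)
    (hmean : ∫ x in a..b, u x = 0) :
    ∫ x in a..b, ‖u x‖ ^ 2 ≤ ((b - a) / (2 * π)) ^ 2 * ∫ x in a..b, ‖u' x‖ ^ 2 := by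
  have hlen : 0 < b - a := sub_pos.2 hab
  have hu'_int : IntervalIntegrable u' volume a b :=
    (intervalIntegrable_iff_integrableOn_Ioc_of_le hab.le).2 (hu'.integrable one_le_two)
  have hcoeff (n : ℤ) : ‖fourierCoeffOn hab u n‖ ^ 2 ≤
      ((b - a) / (2 * π)) ^ 2 * ‖fourierCoeffOn hab u' n‖ ^ 2 := by
    rw [← mul_pow]
    gcongr
    obtain rfl | hn := eq_or_ne n 0
    · rw [fourierCoeffOn_zero_of_integral_eq_zero hab hmean, norm_zero]
      positivity
    · rw [norm_fourierCoeffOn_eq_of_hasDerivAt hab hn hu huu' hu'_int hper]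
      refine mul_le_mul_of_nonneg_right ?_ (norm_nonneg _)
      exact div_le_self (div_nonneg hlen.le two_pi_pos.le) (mod_cast Int.one_le_abs hn)
  have hparseval := hasSum_le hcoeff
    (hasSum_sq_fourierCoeffOn hab (memLp_restrict_Ioc_of_continuousOn_Icc hu 2))
    ((hasSum_sq_fourierCoeffOn hab hu').mul_left _)
  rw [smul_eq_mul, smul_eq_mul, mul_left_comm] at hparseval
  exact le_of_mul_le_mul_left hparseval (inv_pos.2 hlen)

theorem wirtinger_inequality_real (hab : a < b) {u u' : ℝ → ℝ}
    (hu : ContinuousOn u (Icc a b)) (huu' : ∀ x ∈ Ioo a b, HasDerivAt u (u' x) x)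
    (hu' : MemLp u' 2 (volume.restrict (Ioc a b))) (hper : u b = u a)
    (hmean : ∫ x in a..b, u x = 0) :
    ∫ x in a..b, u x ^ 2 ≤ ((b - a) / (2 * π)) ^ 2 * ∫ x in a..b, u' x ^ 2 := by
  have h := wirtinger_inequality hab (u := fun x ↦ (u x : ℂ)) (u' := fun x ↦ (u' x : ℂ))
    (Complex.continuous_ofReal.comp_continuousOn hu) (fun x hx ↦ (huu' x hx).ofReal_comp)
    hu'.ofReal (congrArg _ hper) (by rw [intervalIntegral.integral_ofReal, hmean,
      Complex.ofReal_zero])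
  simpa only [Complex.norm_real, norm_eq_abs, sq_abs] using h

lemma integral_sq_le_integral_deriv_sq_of_integral_eq_zero (hab : a < b) (hlen : b - a ≤ 2 * π)
    {u u' : ℝ → ℝ} (hu : ContinuousOn u (Icc a b))
    (huu' : ∀ x ∈ Ioo a b, HasDerivAt u (u' x) x)
    (hu' : MemLp u' 2 (volume.restrict (Ioc a b))) (hper : u b = u a)
    (hmean : ∫ x in a..b, u x = 0) :
    ∫ x in a..b, u x ^ 2 ≤ ∫ x in a..b, u' x ^ 2 := by
  have hratio : ((b - a) / (2 * π)) ^ 2 ≤ 1 :=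
    pow_le_one₀ (div_nonneg (sub_nonneg.2 hab.le) two_pi_pos.le)
      (div_le_one_of_le₀ hlen two_pi_pos.le)
  exact (wirtinger_inequality_real hab hu huu' hu' hper hmean).trans <|
    mul_le_of_le_one_left
      (intervalIntegral.integral_nonneg hab.le fun _ _ ↦ sq_nonneg _) hratio

lemma exists_integral_add_mul_eq_zero {u v : ℝ → ℝ} (hu : IntervalIntegrable u volume a b)
    (hv : IntervalIntegrable v volume a b) (hv_ne : ∫ x in a..b, v x ≠ 0) :
    ∃ t, ∫ x in a..b, (u x + t * v x) = 0 := by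
  refine ⟨-(∫ x in a..b, u x) / ∫ x in a..b, v x, ?_⟩
  rw [intervalIntegral.integral_add hu (hv.const_mul _), intervalIntegral.integral_const_mul,
    div_mul_cancel₀ _ hv_ne, add_neg_cancel]

end Wirtinger

section Duhamel

/-- Duhamel's formula for the solution `h` of `h'' + h = f` with `h a = h' a = 0`. -/
noncomputable def sinDuhamel (f : ℝ → ℝ) (a x : ℝ) : ℝ :=
  ∫ θ in a..x, f θ * sin (x - θ)

/-- Duhamel's formula for the derivative of `sinDuhamel f a`. -/
noncomputable def cosDuhamel (f : ℝ → ℝ) (a x : ℝ) : ℝ :=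
  ∫ θ in a..x, f θ * cos (x - θ)

variable {f : ℝ → ℝ} {a b : ℝ}

lemma integral_mul_sin_sub (hf : IntervalIntegrable f volume a b) (x : ℝ) :
    ∫ θ in a..b, f θ * sin (x - θ) =
      sin x * (∫ θ in a..b, f θ * cos θ) - cos x * ∫ θ in a..b, f θ * sin θ := by
  rw [← intervalIntegral.integral_const_mul, ← intervalIntegral.integral_const_mul,
    ← intervalIntegral.integral_sub ((hf.mul_continuousOn continuousOn_cos).const_mul _)
      ((hf.mul_continuousOn continuousOn_sin).const_mul _)]
  congr 1 with θ
  rw [sin_sub]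
  ring

lemma integral_mul_cos_sub (hf : IntervalIntegrable f volume a b) (x : ℝ) :
    ∫ θ in a..b, f θ * cos (x - θ) =
      cos x * (∫ θ in a..b, f θ * cos θ) + sin x * ∫ θ in a..b, f θ * sin θ := by
  rw [← intervalIntegral.integral_const_mul, ← intervalIntegral.integral_const_mul,
    ← intervalIntegral.integral_add ((hf.mul_continuousOn continuousOn_cos).const_mul _)
      ((hf.mul_continuousOn continuousOn_sin).const_mul _)]
  congr 1 with θ
  rw [cos_sub]
  ring

lemma sinDuhamel_self (f : ℝ → ℝ) (a : ℝ) : sinDuhamel f a a = 0 :=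
  intervalIntegral.integral_same

lemma cosDuhamel_self (f : ℝ → ℝ) (a : ℝ) : cosDuhamel f a a = 0 :=
  intervalIntegral.integral_same

lemma hasDerivAt_sinDuhamel (hf : Continuous f) (a x : ℝ) :
    HasDerivAt (sinDuhamel f a) (cosDuhamel f a x) x := by
  have heq : sinDuhamel f a = fun y ↦
      sin y * (∫ θ in a..y, f θ * cos θ) - cos y * ∫ θ in a..y, f θ * sin θ :=
    funext fun y ↦ integral_mul_sin_sub (hf.intervalIntegrable a y) y
  have hcos : HasDerivAt (fun y ↦ ∫ θ in a..y, f θ * cos θ) (f x * cos x) x :=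
    ((hf.mul continuous_cos).integral_hasStrictDerivAt a x).hasDerivAt
  have hsin : HasDerivAt (fun y ↦ ∫ θ in a..y, f θ * sin θ) (f x * sin x) x :=
    ((hf.mul continuous_sin).integral_hasStrictDerivAt a x).hasDerivAt
  rw [heq, cosDuhamel, integral_mul_cos_sub (hf.intervalIntegrable a x)]
  refine (((hasDerivAt_sin x).mul hcos).sub ((hasDerivAt_cos x).mul hsin)).congr_deriv ?_
  ring

lemma hasDerivAt_cosDuhamel (hf : Continuous f) (a x : ℝ) :
    HasDerivAt (cosDuhamel f a) (f x - sinDuhamel f a x) x := by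
  have heq : cosDuhamel f a = fun y ↦
      cos y * (∫ θ in a..y, f θ * cos θ) + sin y * ∫ θ in a..y, f θ * sin θ :=
    funext fun y ↦ integral_mul_cos_sub (hf.intervalIntegrable a y) y
  have hcos : HasDerivAt (fun y ↦ ∫ θ in a..y, f θ * cos θ) (f x * cos x) x :=
    ((hf.mul continuous_cos).integral_hasStrictDerivAt a x).hasDerivAt
  have hsin : HasDerivAt (fun y ↦ ∫ θ in a..y, f θ * sin θ) (f x * sin x) x :=
    ((hf.mul continuous_sin).integral_hasStrictDerivAt a x).hasDerivAt
  rw [heq, sinDuhamel, integral_mul_sin_sub (hf.intervalIntegrable a x)]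
  refine (((hasDerivAt_cos x).mul hcos).add ((hasDerivAt_sin x).mul hsin)).congr_deriv ?_
  linear_combination f x * sin_sq_add_cos_sq x

lemma continuous_sinDuhamel (hf : Continuous f) (a : ℝ) : Continuous (sinDuhamel f a) :=
  continuous_iff_continuousAt.2 fun x ↦ (hasDerivAt_sinDuhamel hf a x).continuousAt

lemma continuous_cosDuhamel (hf : Continuous f) (a : ℝ) : Continuous (cosDuhamel f a) :=
  continuous_iff_continuousAt.2 fun x ↦ (hasDerivAt_cosDuhamel hf a x).continuousAt

lemma sinDuhamel_eq_zero (hf : IntervalIntegrable f volume a b)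
    (hcos : ∫ θ in a..b, f θ * cos θ = 0) (hsin : ∫ θ in a..b, f θ * sin θ = 0) :
    sinDuhamel f a b = 0 := by
  rw [sinDuhamel, integral_mul_sin_sub hf, hcos, hsin, mul_zero, mul_zero, sub_zero]

lemma cosDuhamel_eq_zero (hf : IntervalIntegrable f volume a b)
    (hcos : ∫ θ in a..b, f θ * cos θ = 0) (hsin : ∫ θ in a..b, f θ * sin θ = 0) :
    cosDuhamel f a b = 0 := by
  rw [cosDuhamel, integral_mul_cos_sub hf, hcos, hsin, mul_zero, mul_zero, add_zero]

lemma sinDuhamel_eq_integral_mul_sin_sub (hf : IntervalIntegrable f volume a b)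
    (hcos : ∫ θ in a..b, f θ * cos θ = 0) (hsin : ∫ θ in a..b, f θ * sin θ = 0)
    {x : ℝ} (hx : x ∈ uIcc a b) :
    sinDuhamel f a x = ∫ θ in x..b, f θ * sin (θ - x) := by
  have hker : IntervalIntegrable (fun θ ↦ f θ * sin (x - θ)) volume a b :=
    hf.mul_continuousOn (by fun_prop)
  have hadj := intervalIntegral.integral_add_adjacent_intervals
    (hker.mono_set (uIcc_subset_uIcc_left hx)) (hker.mono_set (uIcc_subset_uIcc_right hx))
  rw [integral_mul_sin_sub hf, hcos, hsin, mul_zero, mul_zero, sub_zero] at hadj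
  rw [sinDuhamel, eq_neg_of_add_eq_zero_left hadj, ← intervalIntegral.integral_neg]
  congr 1 with θ
  rw [← mul_neg, ← sin_neg, neg_sub]

lemma sinDuhamel_nonneg (hf : IntervalIntegrable f volume a b) (hlen : b - a ≤ 2 * π)
    (hf_nonneg : ∀ θ ∈ Icc a b, 0 ≤ f θ)
    (hcos : ∫ θ in a..b, f θ * cos θ = 0) (hsin : ∫ θ in a..b, f θ * sin θ = 0)
    {x : ℝ} (hx : x ∈ Icc a b) : 0 ≤ sinDuhamel f a x := by
  rcases le_total (x - a) π with hxa | hxa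
  · refine intervalIntegral.integral_nonneg hx.1 fun θ hθ ↦
      mul_nonneg (hf_nonneg θ ⟨hθ.1, hθ.2.trans hx.2⟩) ?_
    exact sin_nonneg_of_nonneg_of_le_pi (by linarith [hθ.2]) (by linarith [hθ.1])
  · rw [sinDuhamel_eq_integral_mul_sin_sub hf hcos hsin (Icc_subset_uIcc hx)]
    refine intervalIntegral.integral_nonneg hx.2 fun θ hθ ↦
      mul_nonneg (hf_nonneg θ ⟨hx.1.trans hθ.1, hθ.2⟩) ?_
    exact sin_nonneg_of_nonneg_of_le_pi (by linarith [hθ.1]) (by linarith [hθ.2])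

lemma integral_cosDuhamel_mul_deriv (hf : Continuous f) {v v' : ℝ → ℝ}
    (hv : ContinuousOn v (uIcc a b))
    (hvv' : ∀ x ∈ Ioo (min a b) (max a b), HasDerivAt v (v' x) x)
    (hv' : IntervalIntegrable v' volume a b) :
    ∫ x in a..b, cosDuhamel f a x * v' x =
      cosDuhamel f a b * v b + (∫ x in a..b, sinDuhamel f a x * v x) -
        ∫ x in a..b, f x * v x := by
  have hs := continuous_sinDuhamel hf a
  have hsv : IntervalIntegrable (fun x ↦ sinDuhamel f a x * v x) volume a b :=
    (hs.continuousOn.mul hv).intervalIntegrable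
  have hfv : IntervalIntegrable (fun x ↦ f x * v x) volume a b :=
    (hf.continuousOn.mul hv).intervalIntegrable
  rw [intervalIntegral.integral_mul_deriv_eq_deriv_mul_of_hasDerivAt
    (continuous_cosDuhamel hf a).continuousOn hv (fun x _ ↦ hasDerivAt_cosDuhamel hf a x) hvv'
    ((hf.sub hs).intervalIntegrable a b) hv', cosDuhamel_self, zero_mul, sub_zero]
  simp only [sub_mul]
  rw [intervalIntegral.integral_sub hfv hsv]
  ring

lemma integral_sinDuhamel (hf : Continuous f) (a b : ℝ) :
    ∫ x in a..b, sinDuhamel f a x = (∫ x in a..b, f x) - cosDuhamel f a b := by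
  have h := integral_cosDuhamel_mul_deriv (a := a) (b := b) hf (v := fun _ ↦ 1) (v' := fun _ ↦ 0)
    continuousOn_const (fun x _ ↦ hasDerivAt_const x 1) intervalIntegrable_const
  simp only [mul_zero, mul_one, intervalIntegral.integral_zero] at h
  linarith

lemma integral_deriv_sq_sub_integral_sq_add_mul_sinDuhamel (hf : Continuous f) (hab : a ≤ b)
    (hfb : cosDuhamel f a b = 0) {φ φ' : ℝ → ℝ} (hφ : ContinuousOn φ (Icc a b))
    (hφφ' : ∀ x ∈ Ioo a b, HasDerivAt φ (φ' x) x)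
    (hφ' : MemLp φ' 2 (volume.restrict (Ioc a b))) (t : ℝ) :
    (∫ x in a..b, (φ' x + t * cosDuhamel f a x) ^ 2) -
        ∫ x in a..b, (φ x + t * sinDuhamel f a x) ^ 2 =
      (∫ x in a..b, φ' x ^ 2) - (∫ x in a..b, φ x ^ 2) -
        2 * t * (∫ x in a..b, f x * φ x) - t ^ 2 * ∫ x in a..b, f x * sinDuhamel f a x := by
  have hs := continuous_sinDuhamel hf a
  have hc := continuous_cosDuhamel hf a
  have hcross := integral_cosDuhamel_mul_deriv hf (v := φ) (v' := φ') (by rwa [uIcc_of_le hab])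
    (by rwa [min_eq_left hab, max_eq_right hab])
    ((intervalIntegrable_iff_integrableOn_Ioc_of_le hab).2 (hφ'.integrable one_le_two))
  have hself := integral_cosDuhamel_mul_deriv hf (a := a) (b := b) hs.continuousOn
    (fun x _ ↦ hasDerivAt_sinDuhamel hf a x) (hc.intervalIntegrable a b)
  rw [hfb, zero_mul, zero_add] at hcross hself
  simp only [intervalIntegral.integral_of_le hab] at hcross hself ⊢
  rw [integral_add_mul_sq hφ' (memLp_restrict_Ioc_of_continuousOn_Icc hc.continuousOn 2),
    integral_add_mul_sq (memLp_restrict_Ioc_of_continuousOn_Icc hφ 2)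
      (memLp_restrict_Ioc_of_continuousOn_Icc hs.continuousOn 2), hcross, hself]
  ring

end Duhamel

theorem poincare_type_inequality_on_circle_general {a b : ℝ} (hab : a < b) (hlen : b - a ≤ 2 * π)
    {f φ φ' : ℝ → ℝ} (hf : Continuous f) (hf_nonneg : ∀ θ ∈ Icc a b, 0 ≤ f θ)
    (hf_int : 0 < ∫ θ in a..b, f θ)
    (hf_cos : ∫ θ in a..b, f θ * cos θ = 0) (hf_sin : ∫ θ in a..b, f θ * sin θ = 0)
    (hφ : ContinuousOn φ (Icc a b)) (hφφ' : ∀ θ ∈ Ioo a b, HasDerivAt φ (φ' θ) θ)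
    (hφ' : MemLp φ' 2 (volume.restrict (Ioc a b))) (hφ_per : φ b = φ a)
    (hfφ : ∫ θ in a..b, f θ * φ θ = 0) :
    ∫ θ in a..b, φ θ ^ 2 ≤ ∫ θ in a..b, φ' θ ^ 2 := by
  have hfi := hf.intervalIntegrable (μ := volume) a b
  have hs := continuous_sinDuhamel hf a
  have hc := continuous_cosDuhamel hf a
  have hsb : sinDuhamel f a b = 0 := sinDuhamel_eq_zero hfi hf_cos hf_sin
  have hcb : cosDuhamel f a b = 0 := cosDuhamel_eq_zero hfi hf_cos hf_sin
  have hfs : 0 ≤ ∫ θ in a..b, f θ * sinDuhamel f a θ :=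
    intervalIntegral.integral_nonneg hab.le fun θ hθ ↦
      mul_nonneg (hf_nonneg θ hθ) (sinDuhamel_nonneg hfi hlen hf_nonneg hf_cos hf_sin hθ)
  have hs_int : ∫ θ in a..b, sinDuhamel f a θ ≠ 0 := by
    rw [integral_sinDuhamel hf, hcb, sub_zero]
    exact hf_int.ne'
  obtain ⟨t, hmean⟩ := exists_integral_add_mul_eq_zero
    (hφ.intervalIntegrable_of_Icc hab.le) (hs.intervalIntegrable a b) hs_int
  have hwirtinger : ∫ θ in a..b, (φ θ + t * sinDuhamel f a θ) ^ 2 ≤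
      ∫ θ in a..b, (φ' θ + t * cosDuhamel f a θ) ^ 2 :=
    integral_sq_le_integral_deriv_sq_of_integral_eq_zero hab hlen
      (hφ.add (hs.const_mul t).continuousOn)
      (fun θ hθ ↦ (hφφ' θ hθ).add ((hasDerivAt_sinDuhamel hf a θ).const_mul t))
      (hφ'.add (memLp_restrict_Ioc_of_continuousOn_Icc (hc.const_mul t).continuousOn 2))
      (by simp only [hφ_per, hsb, sinDuhamel_self]) hmean
  have henergy :=
    integral_deriv_sq_sub_integral_sq_add_mul_sinDuhamel hf hab.le hcb hφ hφφ' hφ' t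
  rw [hfφ, mul_zero, sub_zero] at henergy
  linarith [mul_nonneg (sq_nonneg t) hfs]

theorem poincare_type_inequality_on_circle
    (f φ : ℝ → ℝ)
    (hf_pos : ∀ θ, 0 < f θ)
    (hf_per : ∀ θ, f (θ + 2 * π) = f θ)
    (hf_C1 : ContDiff ℝ 1 f)
    (hf_cos : ∫ θ in (0:ℝ)..(2 * π), f θ * Real.cos θ = 0)
    (hf_sin : ∫ θ in (0:ℝ)..(2 * π), f θ * Real.sin θ = 0)
    (hφ_per : ∀ θ, φ (θ + 2 * π) = φ θ)
    (hφ_C1 : ContDiff ℝ 1 φ)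
    (hfφ : ∫ θ in (0:ℝ)..(2 * π), f θ * φ θ = 0) :
    (∫ θ in (0:ℝ)..(2 * π), (φ θ) ^ 2) ≤ ∫ θ in (0:ℝ)..(2 * π), (deriv φ θ) ^ 2 :=
  poincare_type_inequality_on_circle_general two_pi_pos (sub_zero _).le hf_C1.continuous
    (fun θ _ ↦ (hf_pos θ).le)
    (intervalIntegral.intervalIntegral_pos_of_pos
      (hf_C1.continuous.intervalIntegrable _ _) hf_pos two_pi_pos)
    hf_cos hf_sin hφ_C1.continuous.continuousOn
    (fun θ _ ↦ (hφ_C1.differentiable one_ne_zero θ).hasDerivAt)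
    (memLp_restrict_Ioc_of_continuousOn_Icc (hφ_C1.continuous_deriv le_rfl).continuousOn 2)
    (by simpa using hφ_per 0) hfφ
end

section
/- Let φ : ℝ → ℝ be a 2π-periodic C¹ function, and define L : ℝ → ℝ by L(σ) = ∫₀^{2π} √(1 + σ²φ(θ)² + σ²(φ'(θ))²) / (1 + σ²φ(θ)²) dθ. Then L is twice differentiable at σ = 0, with L(0) = 2π, L'(0) = 0, and L''(0) = ∫₀^{2π} (φ'(θ))² dθ − ∫₀^{2π} φ(θ)² dθ. -/
open Real

/-!
The derivative of the integrand in `σ` is `σ` times a factor that is continuous in `σ` and bounded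
by `φ ^ 2 + φ' ^ 2`. Dominated convergence gives `L' σ = σ * K σ` with `K` continuous, hence
`L' 0 = 0` and `L'' 0 = K 0`; at `σ = 0` the factor is `φ' ^ 2 - φ ^ 2`. Since the bound only has
to be integrable, square-integrable functions on a finite measure space can replace `φ` and `φ'`.
-/

open MeasureTheory

theorem hasDerivAt_sub_smul_of_continuousAt {𝕜 E : Type*} [NontriviallyNormedField 𝕜]
    [NormedAddCommGroup E] [NormedSpace 𝕜 E] {g : 𝕜 → E} {a : 𝕜} (hg : ContinuousAt g a) :
    HasDerivAt (fun x ↦ (x - a) • g x) (g a) a := by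
  refine hasDerivAt_iff_tendsto_slope.2 ((hg.mono_left nhdsWithin_le_nhds).congr' ?_)
  filter_upwards [self_mem_nhdsWithin] with x hx
  exact (slope_sub_smul g (Ne.symm hx)).symm

theorem memLp_restrict_Ioc_of_continuousOn {E : Type*} [NormedAddCommGroup E] {f : ℝ → E} {a b : ℝ}
    (hf : ContinuousOn f (Set.Icc a b)) (p : ENNReal) (μ : Measure ℝ) [IsLocallyFiniteMeasure μ] :
    MemLp f p (μ.restrict (Set.Ioc a b)) := by
  obtain ⟨C, norm_le⟩ := isCompact_Icc.exists_bound_of_continuousOn hf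
  have : IsFiniteMeasure (μ.restrict (Set.Ioc a b)) :=
    isFiniteMeasure_restrict.2 measure_Ioc_lt_top.ne
  exact .of_bound ((hf.mono Set.Ioc_subset_Icc_self).aestronglyMeasurable measurableSet_Ioc) C
    (ae_restrict_of_forall_mem measurableSet_Ioc fun x hx ↦ norm_le x (Set.Ioc_subset_Icc_self hx))

/-- The density of total curvature of the curve with tangent direction
`v = (cos θ, sin θ, s * φ θ)`, where `p = φ θ` and `q = φ' θ`: it is `‖v × v'‖ / ‖v‖ ^ 2`, in which
the weight `f` of `γ' = f v` cancels. -/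
noncomputable def curvatureDensity (p q s : ℝ) : ℝ :=
  √(1 + s ^ 2 * p ^ 2 + s ^ 2 * q ^ 2) / (1 + s ^ 2 * p ^ 2)

/-- The factor `G` in `∂(curvatureDensity p q s)/∂s = s * G`, with the numerator simplified so that
`|G| ≤ p ^ 2 + q ^ 2` is visible. -/
noncomputable def curvatureDensitySlope (p q s : ℝ) : ℝ :=
  (q ^ 2 * (1 - s ^ 2 * p ^ 2) - p ^ 2 * (1 + s ^ 2 * p ^ 2)) /
    (√(1 + s ^ 2 * p ^ 2 + s ^ 2 * q ^ 2) * (1 + s ^ 2 * p ^ 2) ^ 2)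

section Density

variable (p q s : ℝ)

theorem curvatureDensity_zero : curvatureDensity p q 0 = 1 := by
  simp [curvatureDensity]

theorem curvatureDensitySlope_zero : curvatureDensitySlope p q 0 = q ^ 2 - p ^ 2 := by
  simp [curvatureDensitySlope]

theorem curvatureDensity_nonneg : 0 ≤ curvatureDensity p q s := by
  unfold curvatureDensity
  positivity

theorem curvatureDensity_le : curvatureDensity p q s ≤ 1 + s ^ 2 * q ^ 2 := by
  have sqrt_le : √(1 + s ^ 2 * p ^ 2 + s ^ 2 * q ^ 2) ≤ 1 + s ^ 2 * p ^ 2 + s ^ 2 * q ^ 2 :=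
    Real.sqrt_le_self_iff.2 (.inr (by nlinarith [sq_nonneg (s * p), sq_nonneg (s * q)]))
  refine (div_le_iff₀ (by positivity)).2 (sqrt_le.trans ?_)
  nlinarith [mul_nonneg (sq_nonneg (s * p)) (sq_nonneg (s * q))]

theorem hasDerivAt_curvatureDensity :
    HasDerivAt (curvatureDensity p q) (s * curvatureDensitySlope p q s) s := by
  have sq_deriv : HasDerivAt (fun x : ℝ ↦ x ^ 2) (2 * s) s := by simpa using hasDerivAt_pow 2 s
  have den_deriv := (sq_deriv.mul_const (p ^ 2)).const_add 1
  have radicand_pos : 0 < 1 + s ^ 2 * p ^ 2 + s ^ 2 * q ^ 2 := by positivity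
  have den_ne : 1 + s ^ 2 * p ^ 2 ≠ 0 := by positivity
  have num_deriv := (den_deriv.add (sq_deriv.mul_const (q ^ 2))).sqrt radicand_pos.ne'
  refine (num_deriv.div den_deriv den_ne).congr_deriv ?_
  have sqrt_ne := (Real.sqrt_pos.2 radicand_pos).ne'
  have sq_sqrt := Real.sq_sqrt radicand_pos.le
  simp only [curvatureDensitySlope, Pi.add_apply]
  field_simp
  rw [sq_sqrt]
  ring

theorem abs_curvatureDensitySlope_le : |curvatureDensitySlope p q s| ≤ p ^ 2 + q ^ 2 := by
  have one_le_sqrt : 1 ≤ √(1 + s ^ 2 * p ^ 2 + s ^ 2 * q ^ 2) :=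
    Real.one_le_sqrt.2 (by nlinarith [sq_nonneg (s * p), sq_nonneg (s * q)])
  have one_le_den : 1 ≤ 1 + s ^ 2 * p ^ 2 := by nlinarith [sq_nonneg (s * p)]
  have num_le : |q ^ 2 * (1 - s ^ 2 * p ^ 2) - p ^ 2 * (1 + s ^ 2 * p ^ 2)| ≤
      (p ^ 2 + q ^ 2) * (1 + s ^ 2 * p ^ 2) := by
    rw [abs_le]
    constructor <;> nlinarith [sq_nonneg p, sq_nonneg q, sq_nonneg (s * p * q),
      sq_nonneg (s * p * p)]
  have den_le : 1 + s ^ 2 * p ^ 2 ≤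
      √(1 + s ^ 2 * p ^ 2 + s ^ 2 * q ^ 2) * (1 + s ^ 2 * p ^ 2) ^ 2 :=
    (le_self_pow₀ one_le_den two_ne_zero).trans
      (le_mul_of_one_le_left (by positivity) one_le_sqrt)
  rw [curvatureDensitySlope, abs_div, abs_of_pos (by positivity : 0 < √_ * _),
    div_le_iff₀ (by positivity)]
  exact num_le.trans (by gcongr)

theorem continuous_curvatureDensity :
    Continuous fun x : ℝ × ℝ ↦ curvatureDensity x.1 x.2 s :=
  Continuous.div (by fun_prop) (by fun_prop) fun x ↦ by positivity

theorem continuous_curvatureDensitySlope :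
    Continuous fun x : ℝ × ℝ × ℝ ↦ curvatureDensitySlope x.1 x.2.1 x.2.2 :=
  Continuous.div (by fun_prop) (by fun_prop) fun x ↦ by positivity

end Density

/-- The total curvature `L s`, with functions `f` and `g` on a measure space in place of `φ` and
`φ'`. -/
noncomputable def totalCurvature {Ω : Type*} [MeasurableSpace Ω] (μ : Measure Ω) (f g : Ω → ℝ)
    (s : ℝ) : ℝ :=
  ∫ ω, curvatureDensity (f ω) (g ω) s ∂μ

section TotalCurvature

variable {Ω : Type*} [MeasurableSpace Ω] {μ : Measure Ω} {f g : Ω → ℝ}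

theorem totalCurvature_zero (μ : Measure Ω) (f g : Ω → ℝ) :
    totalCurvature μ f g 0 = μ.real Set.univ := by
  simp [totalCurvature, curvatureDensity_zero]

theorem aestronglyMeasurable_curvatureDensity (hf : AEStronglyMeasurable f μ)
    (hg : AEStronglyMeasurable g μ) (s : ℝ) :
    AEStronglyMeasurable (fun ω ↦ curvatureDensity (f ω) (g ω) s) μ :=
  Continuous.comp_aestronglyMeasurable₂ (g := fun p q ↦ curvatureDensity p q s)
    (continuous_curvatureDensity s) hf hg

theorem aestronglyMeasurable_curvatureDensitySlope (hf : AEStronglyMeasurable f μ)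
    (hg : AEStronglyMeasurable g μ) (s : ℝ) :
    AEStronglyMeasurable (fun ω ↦ curvatureDensitySlope (f ω) (g ω) s) μ :=
  Continuous.comp_aestronglyMeasurable₂ (g := fun p q ↦ curvatureDensitySlope p q s)
    (continuous_curvatureDensitySlope.comp
      (by fun_prop : Continuous fun x : ℝ × ℝ ↦ (x.1, x.2, s))) hf hg

theorem integrable_curvatureDensity [IsFiniteMeasure μ] (hf : AEStronglyMeasurable f μ)
    (hg : MemLp g 2 μ) (s : ℝ) : Integrable (fun ω ↦ curvatureDensity (f ω) (g ω) s) μ := by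
  refine ((integrable_const 1).add (hg.integrable_sq.const_mul (s ^ 2))).mono'
    (aestronglyMeasurable_curvatureDensity hf hg.1 s) (.of_forall fun ω ↦ ?_)
  rw [Real.norm_of_nonneg (curvatureDensity_nonneg _ _ _)]
  exact curvatureDensity_le _ _ _

theorem continuous_integral_curvatureDensitySlope (hf : MemLp f 2 μ) (hg : MemLp g 2 μ) :
    Continuous fun s ↦ ∫ ω, curvatureDensitySlope (f ω) (g ω) s ∂μ := by
  refine continuous_of_dominated (bound := fun ω ↦ f ω ^ 2 + g ω ^ 2)
    (aestronglyMeasurable_curvatureDensitySlope hf.1 hg.1)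
    (fun s ↦ .of_forall fun ω ↦ abs_curvatureDensitySlope_le _ _ s)
    (hf.integrable_sq.add hg.integrable_sq) (.of_forall fun ω ↦ ?_)
  exact continuous_curvatureDensitySlope.comp (by fun_prop : Continuous fun s ↦ (f ω, g ω, s))

theorem integral_curvatureDensitySlope_zero (hf : MemLp f 2 μ) (hg : MemLp g 2 μ) :
    ∫ ω, curvatureDensitySlope (f ω) (g ω) 0 ∂μ = (∫ ω, g ω ^ 2 ∂μ) - ∫ ω, f ω ^ 2 ∂μ := by
  simp only [curvatureDensitySlope_zero, integral_sub hg.integrable_sq hf.integrable_sq]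

variable [IsFiniteMeasure μ]

theorem hasDerivAt_totalCurvature (hf : MemLp f 2 μ) (hg : MemLp g 2 μ) (s : ℝ) :
    HasDerivAt (totalCurvature μ f g) (s * ∫ ω, curvatureDensitySlope (f ω) (g ω) s ∂μ) s := by
  rw [← integral_const_mul]
  refine (hasDerivAt_integral_of_dominated_loc_of_deriv_le
    (F' := fun x ω ↦ x * curvatureDensitySlope (f ω) (g ω) x)
    (bound := fun ω ↦ (|s| + 1) * (f ω ^ 2 + g ω ^ 2)) (Metric.ball_mem_nhds s one_pos)
    (.of_forall (aestronglyMeasurable_curvatureDensity hf.1 hg.1))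
    (integrable_curvatureDensity hf.1 hg s)
    ((aestronglyMeasurable_curvatureDensitySlope hf.1 hg.1 s).const_mul s)
    (.of_forall fun ω x hx ↦ ?_) ((hf.integrable_sq.add hg.integrable_sq).const_mul _)
    (.of_forall fun ω x _ ↦ hasDerivAt_curvatureDensity (f ω) (g ω) x)).2
  have abs_x_le : |x| ≤ |s| + 1 := by
    linarith [abs_sub_abs_le_abs_sub x s, Real.dist_eq x s, Metric.mem_ball.1 hx]
  rw [Real.norm_eq_abs, abs_mul]
  exact mul_le_mul abs_x_le (abs_curvatureDensitySlope_le _ _ _) (abs_nonneg _) (by positivity)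

theorem hasDerivAt_deriv_totalCurvature_zero (hf : MemLp f 2 μ) (hg : MemLp g 2 μ) :
    HasDerivAt (deriv (totalCurvature μ f g)) ((∫ ω, g ω ^ 2 ∂μ) - ∫ ω, f ω ^ 2 ∂μ) 0 := by
  rw [funext fun s ↦ (hasDerivAt_totalCurvature hf hg s).deriv,
    ← integral_curvatureDensitySlope_zero hf hg]
  simpa using hasDerivAt_sub_smul_of_continuousAt
    (continuous_integral_curvatureDensitySlope hf hg).continuousAt (a := 0)

theorem total_curvature_expansion_general (hf : MemLp f 2 μ) (hg : MemLp g 2 μ) {L : ℝ → ℝ}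
    (hL : ∀ σ, L σ = ∫ ω, √(1 + σ ^ 2 * f ω ^ 2 + σ ^ 2 * g ω ^ 2) / (1 + σ ^ 2 * f ω ^ 2) ∂μ) :
    DifferentiableAt ℝ L 0 ∧ DifferentiableAt ℝ (deriv L) 0 ∧
      L 0 = μ.real Set.univ ∧ deriv L 0 = 0 ∧
      deriv (deriv L) 0 = (∫ ω, g ω ^ 2 ∂μ) - ∫ ω, f ω ^ 2 ∂μ := by
  obtain rfl : L = totalCurvature μ f g := funext hL
  have first_deriv := hasDerivAt_totalCurvature hf hg 0
  have second_deriv := hasDerivAt_deriv_totalCurvature_zero hf hg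
  exact ⟨first_deriv.differentiableAt, second_deriv.differentiableAt, totalCurvature_zero μ f g,
    first_deriv.deriv.trans (zero_mul _), second_deriv.deriv⟩

end TotalCurvature

theorem total_curvature_expansion
    (φ : ℝ → ℝ)
    (hφ_per : ∀ θ, φ (θ + 2 * π) = φ θ)
    (hφ_C1 : ContDiff ℝ 1 φ)
    (L : ℝ → ℝ)
    (hL : ∀ σ, L σ = ∫ θ in (0:ℝ)..(2 * π),
      Real.sqrt (1 + σ ^ 2 * (φ θ) ^ 2 + σ ^ 2 * (deriv φ θ) ^ 2) /
        (1 + σ ^ 2 * (φ θ) ^ 2)) :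
    DifferentiableAt ℝ L 0 ∧ DifferentiableAt ℝ (deriv L) 0 ∧
      L 0 = 2 * π ∧ deriv L 0 = 0 ∧
      deriv (deriv L) 0 =
        (∫ θ in (0:ℝ)..(2 * π), (deriv φ θ) ^ 2) -
          ∫ θ in (0:ℝ)..(2 * π), (φ θ) ^ 2 := by
  simp only [intervalIntegral.integral_of_le two_pi_pos.le] at hL ⊢
  simpa [two_pi_pos.le] using total_curvature_expansion_general
    (memLp_restrict_Ioc_of_continuousOn hφ_C1.continuous.continuousOn 2 volume)
    (memLp_restrict_Ioc_of_continuousOn (hφ_C1.continuous_deriv le_rfl).continuousOn 2 volume) hL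
end

section
/- Let f : ℝ → ℝ be a positive 2π-periodic C¹ function with ∫₀^{2π} f(θ)cos θ dθ = 0 and ∫₀^{2π} f(θ)sin θ dθ = 0, and let φ : ℝ → ℝ be a 2π-periodic C¹ function with ∫₀^{2π} f(θ)φ(θ) dθ = 0. Then for every σ ∈ ℝ, ∫₀^{2π} √(1 + σ²φ(θ)² + σ²(φ'(θ))²) / (1 + σ²φ(θ)²) dθ ≥ 2π. -/
open Real

/-! Normalising the velocity of a closed curve gives a closed curve `T` on the unit sphere, of which
a positively weighted average vanishes. If `T` were shorter than `2π`, pick the point `T p` that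
halves its length. Every `T t` lies on one of the two arcs joining `T a` to `T p`, each shorter than
`π`, so the angles from `T t` to `T a` and to `T p` add up to less than `π`; hence `T a + T p` has
positive inner product with all of `T`, contradicting the vanishing average. -/

open Set MeasureTheory InnerProductGeometry NormedSpace
open scoped RealInnerProductSpace Topology

lemma exists_integral_eq_half {g : ℝ → ℝ} {a b : ℝ} (hg : IntervalIntegrable g volume a b) :
    ∃ p ∈ uIcc a b, ∫ t in a..p, g t = (∫ t in a..b, g t) / 2 ∧
      ∫ t in p..b, g t = (∫ t in a..b, g t) / 2 := by
  have half_mem : (∫ t in a..b, g t) / 2 ∈ uIcc (∫ t in a..a, g t) (∫ t in a..b, g t) := by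
    rw [intervalIntegral.integral_same, mem_uIcc]
    rcases le_total 0 (∫ t in a..b, g t) with h | h
    · left; constructor <;> linarith
    · right; constructor <;> linarith
  obtain ⟨p, hp, left_half⟩ := intermediate_value_uIcc
    (intervalIntegral.continuousOn_primitive_interval' hg left_mem_uIcc) half_mem
  have split := intervalIntegral.integral_add_adjacent_intervals
    (hg.mono_set (uIcc_subset_uIcc_left hp)) (hg.mono_set (uIcc_subset_uIcc_right hp))
  exact ⟨p, hp, left_half, by linarith⟩

section InnerProductSpace

variable {V : Type*} [NormedAddCommGroup V] [InnerProductSpace ℝ V]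

lemma abs_inner_le_norm_mul_sqrt_of_inner_eq_zero {u x w : V} (hu : ‖u‖ ≤ 1) (hx : ‖x‖ = 1)
    (hxw : ⟪x, w⟫ = 0) : |⟪u, w⟫| ≤ ‖w‖ * √(1 - ⟪u, x⟫ ^ 2) := by
  have inner_eq : ⟪u, w⟫ = ⟪u - ⟪u, x⟫ • x, w⟫ := by
    rw [inner_sub_left, real_inner_smul_left, hxw, mul_zero, sub_zero]
  have norm_sq_eq : ‖u - ⟪u, x⟫ • x‖ ^ 2 = ‖u‖ ^ 2 - ⟪u, x⟫ ^ 2 := by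
    rw [norm_sub_sq_real, real_inner_smul_right, norm_smul, hx, norm_eq_abs, mul_one, sq_abs]
    ring
  have norm_le : ‖u - ⟪u, x⟫ • x‖ ≤ √(1 - ⟪u, x⟫ ^ 2) := by
    refine le_sqrt_of_sq_le ?_
    rw [norm_sq_eq]
    gcongr
    exact pow_le_one₀ (norm_nonneg u) hu
  calc |⟪u, w⟫| ≤ ‖u - ⟪u, x⟫ • x‖ * ‖w‖ := inner_eq ▸ abs_real_inner_le_norm _ _
    _ ≤ ‖w‖ * √(1 - ⟪u, x⟫ ^ 2) := by rw [mul_comm]; gcongr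

lemma inner_add_pos_of_angle_add_angle_lt_pi {x y z : V} (hxy : ‖x‖ = ‖y‖)
    (h : angle x z + angle y z < π) : 0 < ⟪x + y, z⟫ := by
  have cos_add_pos : 0 < cos (angle x z) + cos (angle y z) := by
    have := cos_lt_cos_of_nonneg_of_le_pi (angle_nonneg y z)
      (sub_le_self π (angle_nonneg x z)) (by linarith)
    rw [cos_pi_sub] at this
    linarith
  have hx : x ≠ 0 := by
    rintro rfl
    obtain rfl : y = 0 := norm_eq_zero.1 (by simpa using hxy.symm)
    simp at h
  have hz : z ≠ 0 := by
    rintro rfl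
    simp at h
  calc 0 < (cos (angle x z) + cos (angle y z)) * (‖x‖ * ‖z‖) := by positivity
    _ = ⟪x + y, z⟫ := by
      rw [inner_add_left, ← cos_angle_mul_norm_mul_norm x z, ← cos_angle_mul_norm_mul_norm y z, hxy]
      ring

lemma inner_deriv_eq_zero_of_norm_eventually_const {T : ℝ → V} {w : V} {t c : ℝ}
    (hT : HasDerivAt T w t) (hc : ∀ᶠ s in 𝓝 t, ‖T s‖ = c) : ⟪T t, w⟫ = 0 := by
  have const_sq : HasDerivAt (‖T ·‖ ^ 2) 0 t :=
    (hasDerivAt_const t (c ^ 2)).congr_of_eventuallyEq <| hc.mono fun s hs ↦ by simp [hs]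
  simpa using hT.norm_sq.unique const_sq

/-- A continuous curve `T` on the unit sphere over `[a, b]` with velocity `T'` on `(a, b)` and
finite length `∫ ‖T'‖`. The velocity is a separate function, so that no differentiability is
required at the endpoints. -/
structure IsSphericalCurveOn (T T' : ℝ → V) (a b : ℝ) : Prop where
  continuousOn : ContinuousOn T (Icc a b)
  norm_eq_one : ∀ t ∈ Icc a b, ‖T t‖ = 1
  hasDerivAt : ∀ t ∈ Ioo a b, HasDerivAt T (T' t) t
  intervalIntegrable : IntervalIntegrable (‖T' ·‖) volume a b

namespace IsSphericalCurveOn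

variable {T T' : ℝ → V} {a b : ℝ}

lemma mono (hT : IsSphericalCurveOn T T' a b) {c d : ℝ} (hac : a ≤ c) (hcd : c ≤ d) (hdb : d ≤ b) :
    IsSphericalCurveOn T T' c d where
  continuousOn := hT.continuousOn.mono (Icc_subset_Icc hac hdb)
  norm_eq_one t ht := hT.norm_eq_one t (Icc_subset_Icc hac hdb ht)
  hasDerivAt t ht := hT.hasDerivAt t (Ioo_subset_Ioo hac hdb ht)
  intervalIntegrable := hT.intervalIntegrable.mono_set <| by
    rw [uIcc_of_le hcd, uIcc_of_le (hac.trans (hcd.trans hdb))]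
    exact Icc_subset_Icc hac hdb

lemma inner_velocity_eq_zero (hT : IsSphericalCurveOn T T' a b) {t : ℝ} (ht : t ∈ Ioo a b) :
    ⟪T t, T' t⟫ = 0 :=
  inner_deriv_eq_zero_of_norm_eventually_const (hT.hasDerivAt t ht) <|
    Filter.mem_of_superset (Icc_mem_nhds ht.1 ht.2) hT.norm_eq_one

-- Strictness of `‖u‖ < 1` keeps `⟪u, T t⟫` away from `±1`, where `arccos` is not differentiable.
lemma arccos_inner_sub_arccos_inner_le (hT : IsSphericalCurveOn T T' a b) (hab : a ≤ b) {u : V}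
    (hu : ‖u‖ < 1) : arccos ⟪u, T b⟫ - arccos ⟪u, T a⟫ ≤ ∫ t in a..b, ‖T' t‖ := by
  refine intervalIntegral.sub_le_integral_of_hasDeriv_right_of_le hab
    (g := fun t ↦ arccos ⟪u, T t⟫) (g' := fun t ↦ -(1 / √(1 - ⟪u, T t⟫ ^ 2)) * ⟪u, T' t⟫)
    (continuous_arccos.comp_continuousOn (continuousOn_const.inner hT.continuousOn))
    (fun t ht ↦ ?_) ((intervalIntegrable_iff_integrableOn_Icc_of_le hab).1 hT.intervalIntegrable)
    (fun t ht ↦ ?_)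
  all_goals
    have unit := hT.norm_eq_one t (Ioo_subset_Icc_self ht)
    have abs_lt_one : |⟪u, T t⟫| < 1 :=
      (abs_real_inner_le_norm u (T t)).trans_lt (by rwa [unit, mul_one])
  · have inner_deriv : HasDerivAt (fun s ↦ ⟪u, T s⟫) ⟪u, T' t⟫ t := by
      simpa using (hasDerivAt_const t u).inner ℝ (hT.hasDerivAt t ht)
    obtain ⟨neg_one_lt, lt_one⟩ := abs_lt.1 abs_lt_one
    exact ((hasDerivAt_arccos neg_one_lt.ne' lt_one.ne).comp t inner_deriv).hasDerivWithinAt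
  · have sqrt_pos : 0 < √(1 - ⟪u, T t⟫ ^ 2) :=
      Real.sqrt_pos.2 (sub_pos.2 ((sq_lt_one_iff_abs_lt_one _).2 abs_lt_one))
    calc -(1 / √(1 - ⟪u, T t⟫ ^ 2)) * ⟪u, T' t⟫ = -⟪u, T' t⟫ / √(1 - ⟪u, T t⟫ ^ 2) := by ring
      _ ≤ ‖T' t‖ := (div_le_iff₀ sqrt_pos).2 <| (neg_le_abs _).trans <|
        abs_inner_le_norm_mul_sqrt_of_inner_eq_zero hu.le unit (hT.inner_velocity_eq_zero ht)

theorem angle_le_integral_norm (hT : IsSphericalCurveOn T T' a b) (hab : a ≤ b) :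
    angle (T a) (T b) ≤ ∫ t in a..b, ‖T' t‖ := by
  have norm_a := hT.norm_eq_one a (left_mem_Icc.2 hab)
  have norm_b := hT.norm_eq_one b (right_mem_Icc.2 hab)
  have le_of_lt_one : ∀ k ∈ Ioo (0 : ℝ) 1,
      arccos ⟪k • T a, T b⟫ - arccos ⟪k • T a, T a⟫ ≤ ∫ t in a..b, ‖T' t‖ := fun k hk ↦
    hT.arccos_inner_sub_arccos_inner_le hab <| by
      rw [norm_smul, norm_a, mul_one, norm_of_nonneg hk.1.le]
      exact hk.2
  have tendsto_angle : Filter.Tendsto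
      (fun k : ℝ ↦ arccos ⟪k • T a, T b⟫ - arccos ⟪k • T a, T a⟫) (𝓝[<] 1)
      (𝓝 (angle (T a) (T b))) := by
    have cont : Continuous fun k : ℝ ↦ arccos ⟪k • T a, T b⟫ - arccos ⟪k • T a, T a⟫ := by
      fun_prop
    have limit_eq : arccos ⟪(1 : ℝ) • T a, T b⟫ - arccos ⟪(1 : ℝ) • T a, T a⟫
        = angle (T a) (T b) := by
      simp [angle, norm_a, norm_b]
    exact limit_eq ▸ (cont.tendsto 1).mono_left nhdsWithin_le_nhds
  exact le_of_tendsto tendsto_angle <|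
    Filter.mem_of_superset (Ioo_mem_nhdsLT zero_lt_one) le_of_lt_one

lemma angle_add_angle_le_integral_norm (hT : IsSphericalCurveOn T T' a b) {t : ℝ}
    (ht : t ∈ Icc a b) :
    angle (T a) (T t) + angle (T b) (T t) ≤ ∫ s in a..b, ‖T' s‖ := by
  have before := hT.mono le_rfl ht.1 ht.2
  have after := hT.mono ht.1 ht.2 le_rfl
  rw [angle_comm (T b), ← intervalIntegral.integral_add_adjacent_intervals
    before.intervalIntegrable after.intervalIntegrable]
  exact add_le_add (before.angle_le_integral_norm ht.1) (after.angle_le_integral_norm ht.2)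

theorem exists_forall_inner_pos_of_integral_norm_lt_two_pi (hT : IsSphericalCurveOn T T' a b)
    (hab : a ≤ b) (hclosed : T a = T b) (hlength : ∫ t in a..b, ‖T' t‖ < 2 * π) :
    ∃ u : V, ∀ t ∈ Icc a b, 0 < ⟪u, T t⟫ := by
  obtain ⟨p, hp, left_half, right_half⟩ := exists_integral_eq_half hT.intervalIntegrable
  rw [uIcc_of_le hab] at hp
  have norm_eq : ‖T a‖ = ‖T p‖ := by
    rw [hT.norm_eq_one a (left_mem_Icc.2 hab), hT.norm_eq_one p hp]
  refine ⟨T a + T p, fun t ht ↦ inner_add_pos_of_angle_add_angle_lt_pi norm_eq ?_⟩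
  rcases le_total t p with htp | hpt
  · have := (hT.mono le_rfl hp.1 hp.2).angle_add_angle_le_integral_norm ⟨ht.1, htp⟩
    linarith
  · have := (hT.mono hp.1 hp.2 le_rfl).angle_add_angle_le_integral_norm ⟨hpt, ht.2⟩
    rw [← hclosed] at this
    linarith

theorem two_pi_le_integral_norm [CompleteSpace V] (hT : IsSphericalCurveOn T T' a b) (hab : a < b)
    (hclosed : T a = T b) {f : ℝ → ℝ} (hf : IntervalIntegrable f volume a b)
    (hf_pos : ∀ t ∈ Ioo a b, 0 < f t) (hfT : ∫ t in a..b, f t • T t = 0) :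
    2 * π ≤ ∫ t in a..b, ‖T' t‖ := by
  by_contra! hlength
  obtain ⟨u, hu⟩ := hT.exists_forall_inner_pos_of_integral_norm_lt_two_pi hab.le hclosed hlength
  have integrable : IntervalIntegrable (fun t ↦ f t • T t) volume a b :=
    hf.smul_continuousOn (uIcc_of_le hab.le ▸ hT.continuousOn)
  have integral_pos : 0 < ∫ t in a..b, innerSL ℝ u (f t • T t) := by
    refine intervalIntegral.intervalIntegral_pos_of_pos_on
      ⟨(innerSL ℝ u).integrable_comp integrable.1, (innerSL ℝ u).integrable_comp integrable.2⟩
      (fun t ht ↦ ?_) hab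
    rw [innerSL_apply_apply, real_inner_smul_right]
    exact mul_pos (hf_pos t ht) (hu t (Ioo_subset_Icc_self ht))
  rw [(innerSL ℝ u).intervalIntegral_comp_comm integrable, hfT, map_zero] at integral_pos
  exact integral_pos.false

end IsSphericalCurveOn

/-- The velocity of `normalize x` when `x` moves with velocity `v`: the component of `v` orthogonal
to `x`, scaled by `‖x‖⁻¹`. Its norm is the angular speed of `x` about the origin. -/
noncomputable def normalizeVelocity (x v : V) : V := ‖x‖⁻¹ • (v - (⟪x, v⟫ / ‖x‖ ^ 2) • x)

lemma hasDerivAt_normalize {r : ℝ → V} {v : V} {t : ℝ} (hr : HasDerivAt r v t) (h0 : r t ≠ 0) :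
    HasDerivAt (fun s ↦ normalize (r s)) (normalizeVelocity (r t) v) t := by
  have norm_ne : ‖r t‖ ≠ 0 := norm_ne_zero_iff.2 h0
  have norm_deriv : HasDerivAt (‖r ·‖) (⟪r t, v⟫ / ‖r t‖) t := by
    have sqrt_deriv := hr.norm_sq.sqrt (pow_ne_zero 2 norm_ne)
    simp only [Real.sqrt_sq (norm_nonneg _)] at sqrt_deriv
    exact sqrt_deriv.congr_deriv (mul_div_mul_left _ _ two_ne_zero)
  refine ((norm_deriv.inv norm_ne).smul hr).congr_deriv ?_
  rw [normalizeVelocity, smul_sub, smul_smul, sub_eq_add_neg, ← neg_smul]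
  congr 2
  field_simp

lemma norm_normalizeVelocity {x : V} (hx : x ≠ 0) (v : V) :
    ‖normalizeVelocity x v‖ = √(‖x‖ ^ 2 * ‖v‖ ^ 2 - ⟪x, v⟫ ^ 2) / ‖x‖ ^ 2 := by
  have norm_pos : 0 < ‖x‖ := norm_pos_iff.2 hx
  have norm_sq_eq : ‖v - (⟪x, v⟫ / ‖x‖ ^ 2) • x‖ ^ 2
      = (‖x‖ ^ 2 * ‖v‖ ^ 2 - ⟪x, v⟫ ^ 2) / ‖x‖ ^ 2 := by
    rw [norm_sub_sq_real, real_inner_smul_right, norm_smul, mul_pow, norm_eq_abs, sq_abs,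
      real_inner_comm]
    field_simp
    ring
  have norm_eq : ‖v - (⟪x, v⟫ / ‖x‖ ^ 2) • x‖ = √(‖x‖ ^ 2 * ‖v‖ ^ 2 - ⟪x, v⟫ ^ 2) / ‖x‖ := by
    rw [← Real.sqrt_sq (norm_nonneg (v - _)), norm_sq_eq, Real.sqrt_div' _ (sq_nonneg _),
      Real.sqrt_sq norm_pos.le]
  rw [normalizeVelocity, norm_smul, norm_inv, norm_norm, norm_eq]
  field_simp

lemma norm_normalizeVelocity_le {x : V} (hx : x ≠ 0) (v : V) :
    ‖normalizeVelocity x v‖ ≤ ‖x‖⁻¹ * ‖v‖ := by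
  calc ‖normalizeVelocity x v‖
      ≤ √((‖x‖ * ‖v‖) ^ 2) / ‖x‖ ^ 2 := by
        rw [norm_normalizeVelocity hx, mul_pow]
        gcongr
        exact sub_le_self _ (sq_nonneg _)
    _ = ‖x‖⁻¹ * ‖v‖ := by
        rw [Real.sqrt_sq (by positivity)]
        field_simp

variable {r r' : ℝ → V} {a b : ℝ}

lemma intervalIntegrable_norm_normalizeVelocity (hr : ContinuousOn r (uIcc a b))
    (h0 : ∀ t ∈ uIcc a b, r t ≠ 0) (hr' : IntervalIntegrable r' volume a b) :
    IntervalIntegrable (fun t ↦ ‖normalizeVelocity (r t) (r' t)‖) volume a b := by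
  have inv_norm : ContinuousOn (fun t ↦ ‖r t‖⁻¹) (uIcc a b) :=
    hr.norm.inv₀ fun t ht ↦ norm_ne_zero_iff.2 (h0 t ht)
  have r_meas : AEStronglyMeasurable r (volume.restrict (uIoc a b)) :=
    (hr.mono uIoc_subset_uIcc).aestronglyMeasurable measurableSet_uIoc
  have r'_meas := hr'.def'.aestronglyMeasurable
  refine (hr'.norm.continuousOn_mul inv_norm).mono_fun' ?_ ?_
  · have inv_norm_meas : AEStronglyMeasurable (fun t ↦ ‖r t‖⁻¹) (volume.restrict (uIoc a b)) :=
      r_meas.norm.aemeasurable.inv.aestronglyMeasurable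
    have coeff_meas : AEStronglyMeasurable (fun t ↦ ⟪r t, r' t⟫ / ‖r t‖ ^ 2)
        (volume.restrict (uIoc a b)) :=
      ((r_meas.inner r'_meas).aemeasurable.div
        (r_meas.norm.aemeasurable.pow_const 2)).aestronglyMeasurable
    exact (inv_norm_meas.smul (r'_meas.sub (coeff_meas.smul r_meas))).norm
  · refine (ae_restrict_mem measurableSet_uIoc).mono fun t ht ↦ ?_
    simpa only [norm_norm] using norm_normalizeVelocity_le (h0 t (uIoc_subset_uIcc ht)) (r' t)

lemma isSphericalCurveOn_normalize (hab : a ≤ b) (hr : ContinuousOn r (Icc a b))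
    (h0 : ∀ t ∈ Icc a b, r t ≠ 0) (hderiv : ∀ t ∈ Ioo a b, HasDerivAt r (r' t) t)
    (hr' : IntervalIntegrable r' volume a b) :
    IsSphericalCurveOn (fun t ↦ normalize (r t)) (fun t ↦ normalizeVelocity (r t) (r' t)) a b where
  continuousOn := (hr.norm.inv₀ fun t ht ↦ norm_ne_zero_iff.2 (h0 t ht)).smul hr
  norm_eq_one t ht := norm_normalize_eq_one_iff.2 (h0 t ht)
  hasDerivAt t ht := hasDerivAt_normalize (hderiv t ht) (h0 t (Ioo_subset_Icc_self ht))
  intervalIntegrable := by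
    rw [← uIcc_of_le hab] at hr h0
    exact intervalIntegrable_norm_normalizeVelocity hr h0 hr'

/-- Fenchel's theorem for the closed curve `t ↦ ∫ s in a..t, f s • r s`. -/
theorem two_pi_le_integral_norm_normalizeVelocity [CompleteSpace V] (hab : a < b)
    (hr : ContinuousOn r (Icc a b)) (h0 : ∀ t ∈ Icc a b, r t ≠ 0)
    (hderiv : ∀ t ∈ Ioo a b, HasDerivAt r (r' t) t) (hr' : IntervalIntegrable r' volume a b)
    (hclosed : r a = r b) {f : ℝ → ℝ} (hf : IntervalIntegrable f volume a b)
    (hf_pos : ∀ t ∈ Ioo a b, 0 < f t) (hfr : ∫ t in a..b, f t • r t = 0) :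
    2 * π ≤ ∫ t in a..b, ‖normalizeVelocity (r t) (r' t)‖ := by
  refine (isSphericalCurveOn_normalize hab.le hr h0 hderiv hr').two_pi_le_integral_norm hab
    (congrArg NormedSpace.normalize hclosed) (f := fun t ↦ f t * ‖r t‖)
    (hf.mul_continuousOn (uIcc_of_le hab.le ▸ hr.norm))
    (fun t ht ↦ mul_pos (hf_pos t ht) (norm_pos_iff.2 (h0 t (Ioo_subset_Icc_self ht)))) ?_
  simpa only [mul_smul, norm_smul_normalize] using hfr

end InnerProductSpace

/-- The point at height `z` above `(cos θ, sin θ)` on the unit cylinder. -/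
noncomputable def cylinderPoint (θ z : ℝ) : EuclideanSpace ℝ (Fin 3) := !₂[cos θ, sin θ, z]

/-- The velocity of `cylinderPoint θ z` at unit angular velocity and vertical velocity `z'`. -/
noncomputable def cylinderVelocity (θ z' : ℝ) : EuclideanSpace ℝ (Fin 3) := !₂[-sin θ, cos θ, z']

lemma norm_cylinderPoint_sq (θ z : ℝ) : ‖cylinderPoint θ z‖ ^ 2 = 1 + z ^ 2 := by
  simp [EuclideanSpace.norm_sq_eq, Fin.sum_univ_three, cylinderPoint]

lemma norm_cylinderVelocity_sq (θ z' : ℝ) : ‖cylinderVelocity θ z'‖ ^ 2 = 1 + z' ^ 2 := by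
  simp [EuclideanSpace.norm_sq_eq, Fin.sum_univ_three, cylinderVelocity]

lemma inner_cylinderPoint_cylinderVelocity (θ z z' : ℝ) :
    ⟪cylinderPoint θ z, cylinderVelocity θ z'⟫ = z * z' := by
  simp [PiLp.inner_apply, Fin.sum_univ_three, cylinderPoint, cylinderVelocity, mul_comm]

lemma cylinderPoint_ne_zero (θ z : ℝ) : cylinderPoint θ z ≠ 0 := by
  rw [← norm_ne_zero_iff, ← sq_pos_iff, norm_cylinderPoint_sq]
  positivity

lemma norm_normalizeVelocity_cylinderPoint (θ z z' : ℝ) :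
    ‖normalizeVelocity (cylinderPoint θ z) (cylinderVelocity θ z')‖
      = √(1 + z ^ 2 + z' ^ 2) / (1 + z ^ 2) := by
  rw [norm_normalizeVelocity (cylinderPoint_ne_zero θ z), norm_cylinderPoint_sq,
    norm_cylinderVelocity_sq, inner_cylinderPoint_cylinderVelocity]
  congr 2
  ring

lemma hasDerivAt_cylinderPoint {ψ : ℝ → ℝ} {ψ' θ : ℝ} (hψ : HasDerivAt ψ ψ' θ) :
    HasDerivAt (fun t ↦ cylinderPoint t (ψ t)) (cylinderVelocity θ ψ') θ := by
  refine (PiLp.hasFDerivAt_toLp (𝕜 := ℝ) 2 ![cos θ, sin θ, ψ θ]).comp_hasDerivAt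
    (f := fun t ↦ ![cos t, sin t, ψ t]) (f' := ![-sin θ, cos θ, ψ']) θ (hasDerivAt_pi.2 fun i ↦ ?_)
  fin_cases i
  exacts [hasDerivAt_cos θ, hasDerivAt_sin θ, hψ]

lemma continuousOn_cylinderPoint {ψ : ℝ → ℝ} {s : Set ℝ} (hψ : ContinuousOn ψ s) :
    ContinuousOn (fun θ ↦ cylinderPoint θ (ψ θ)) s := by
  refine (PiLp.continuous_toLp 2 _).comp_continuousOn (continuousOn_pi.2 fun i ↦ ?_)
  fin_cases i
  exacts [continuousOn_cos, continuousOn_sin, hψ]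

lemma intervalIntegrable_cylinderVelocity {ψ' : ℝ → ℝ} {a b : ℝ}
    (hψ' : IntervalIntegrable ψ' volume a b) :
    IntervalIntegrable (fun θ ↦ cylinderVelocity θ (ψ' θ)) volume a b := by
  rw [intervalIntegrable_iff, IntegrableOn, integrable_piLp_iff]
  intro i
  fin_cases i
  exacts [(continuous_sin.neg.intervalIntegrable a b).def',
    (continuous_cos.intervalIntegrable a b).def', hψ'.def']

lemma integral_smul_cylinderPoint_eq_zero {f ψ : ℝ → ℝ} {a b : ℝ}
    (hf : IntervalIntegrable f volume a b) (hψ : ContinuousOn ψ (uIcc a b))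
    (hf_cos : ∫ θ in a..b, f θ * cos θ = 0) (hf_sin : ∫ θ in a..b, f θ * sin θ = 0)
    (hfψ : ∫ θ in a..b, f θ * ψ θ = 0) : ∫ θ in a..b, f θ • cylinderPoint θ (ψ θ) = 0 := by
  ext i
  have eval := (EuclideanSpace.proj (𝕜 := ℝ) i).intervalIntegral_comp_comm
    (hf.smul_continuousOn (continuousOn_cylinderPoint hψ))
  refine eval.symm.trans ?_
  fin_cases i
  exacts [hf_cos, hf_sin, hfψ]

theorem fenchel_total_curvature_lower_bound_general
    {f φ φ' : ℝ → ℝ}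
    (hf_pos : ∀ θ ∈ Ioo 0 (2 * π), 0 < f θ)
    (hf_int : IntervalIntegrable f volume 0 (2 * π))
    (hf_cos : ∫ θ in (0 : ℝ)..(2 * π), f θ * cos θ = 0)
    (hf_sin : ∫ θ in (0 : ℝ)..(2 * π), f θ * sin θ = 0)
    (hφ_cont : ContinuousOn φ (Icc 0 (2 * π)))
    (hφ_deriv : ∀ θ ∈ Ioo 0 (2 * π), HasDerivAt φ (φ' θ) θ)
    (hφ'_int : IntervalIntegrable φ' volume 0 (2 * π))
    (hφ_closed : φ 0 = φ (2 * π))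
    (hfφ : ∫ θ in (0 : ℝ)..(2 * π), f θ * φ θ = 0)
    (σ : ℝ) :
    2 * π ≤ ∫ θ in (0 : ℝ)..(2 * π),
      √(1 + σ ^ 2 * φ θ ^ 2 + σ ^ 2 * φ' θ ^ 2) / (1 + σ ^ 2 * φ θ ^ 2) := by
  have hf_height : ∫ θ in (0 : ℝ)..(2 * π), f θ * (σ * φ θ) = 0 := by
    simp only [mul_left_comm _ σ, intervalIntegral.integral_const_mul, hfφ, mul_zero]
  have fenchel := two_pi_le_integral_norm_normalizeVelocity (r := fun θ ↦ cylinderPoint θ (σ * φ θ))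
    (r' := fun θ ↦ cylinderVelocity θ (σ * φ' θ)) two_pi_pos
    (continuousOn_cylinderPoint (hφ_cont.const_mul σ))
    (fun θ _ ↦ cylinderPoint_ne_zero _ _)
    (fun θ hθ ↦ hasDerivAt_cylinderPoint ((hφ_deriv θ hθ).const_mul σ))
    (intervalIntegrable_cylinderVelocity (hφ'_int.const_mul σ))
    (by simp [cylinderPoint, hφ_closed])
    hf_int hf_pos
    (integral_smul_cylinderPoint_eq_zero hf_int
      (uIcc_of_le two_pi_pos.le ▸ hφ_cont.const_mul σ) hf_cos hf_sin hf_height)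
  simpa only [norm_normalizeVelocity_cylinderPoint, mul_pow] using fenchel

theorem fenchel_total_curvature_lower_bound
    (f φ : ℝ → ℝ)
    (hf_pos : ∀ θ, 0 < f θ)
    (hf_per : ∀ θ, f (θ + 2 * π) = f θ)
    (hf_C1 : ContDiff ℝ 1 f)
    (hf_cos : ∫ θ in (0:ℝ)..(2 * π), f θ * Real.cos θ = 0)
    (hf_sin : ∫ θ in (0:ℝ)..(2 * π), f θ * Real.sin θ = 0)
    (hφ_per : ∀ θ, φ (θ + 2 * π) = φ θ)
    (hφ_C1 : ContDiff ℝ 1 φ)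
    (hfφ : ∫ θ in (0:ℝ)..(2 * π), f θ * φ θ = 0)
    (σ : ℝ) :
    2 * π ≤ ∫ θ in (0:ℝ)..(2 * π),
      Real.sqrt (1 + σ ^ 2 * (φ θ) ^ 2 + σ ^ 2 * (deriv φ θ) ^ 2) /
        (1 + σ ^ 2 * (φ θ) ^ 2) :=
  fenchel_total_curvature_lower_bound_general (fun θ _ ↦ hf_pos θ)
    (hf_C1.continuous.intervalIntegrable _ _) hf_cos hf_sin hφ_C1.continuous.continuousOn
    (fun θ _ ↦ (hφ_C1.differentiable one_ne_zero θ).hasDerivAt)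
    ((hφ_C1.continuous_deriv le_rfl).intervalIntegrable _ _) (by simpa using (hφ_per 0).symm) hfφ σ
end

section
/- Let f : ℝ → ℝ be a positive 2π-periodic C¹ function with ∫₀^{2π} f(θ)cos θ dθ = 0 and ∫₀^{2π} f(θ)sin θ dθ = 0. Define its Fourier coefficients a₀ = (1/π)∫₀^{2π} f(θ) dθ, and for n ≥ 2, aₙ = (1/π)∫₀^{2π} f(θ)cos(nθ) dθ, bₙ = (1/π)∫₀^{2π} f(θ)sin(nθ) dθ. Then the strict inequality ∑_{n=2}^{∞} (aₙ² + bₙ²)/(n² − 1) < a₀²/2 holds. -/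
open Real

open MeasureTheory Set

/-!
Writing `aₙ² + bₙ²` as a double integral of `cos (n (s - t))` against `f(s) f(t) ds dt` turns the
sum over `n ≥ 2` into the double integral of `K (s - t)`, where
`K x = ∑_{n ≥ 2} cos (n x) / (n² - 1)`. Partial fractions and the Taylor series of the logarithm,
continued to the unit circle, give `K x = 1/2 + cos x / 4 + sin x * arg (1 - exp (i x))`. The
imaginary part of `1 - exp (i x)` is `-sin x`, so the last term is negative unless `sin x = 0`,
which happens only on a null set of pairs `(s, t)`. The remaining terms `1/2 + cos x / 4` integrate
to `π² (a₀² / 2 + (a₁² + b₁²) / 4)`.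
-/

lemma one_le_natCast_add_two_sq_sub_one (n : ℕ) : 1 ≤ (((n + 2 : ℕ) : ℝ) ^ 2 - 1) := by
  push_cast
  nlinarith [n.cast_nonneg (α := ℝ)]

lemma summable_inv_natCast_add_two_sq_sub_one :
    Summable fun n : ℕ ↦ (((n + 2 : ℕ) : ℝ) ^ 2 - 1)⁻¹ := by
  have h : Summable fun n : ℕ ↦ (((n + 1 : ℕ) : ℝ) ^ 2)⁻¹ :=
    (summable_nat_add_iff 1).2 (Real.summable_nat_pow_inv.2 one_lt_two)
  refine h.of_nonneg_of_le
    (fun n ↦ inv_nonneg.2 (zero_le_one.trans (one_le_natCast_add_two_sq_sub_one n))) fun n ↦ ?_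
  gcongr
  push_cast
  nlinarith [n.cast_nonneg (α := ℝ)]

section LogSeries

open Complex

lemma norm_pow_add_three_div_le {z : ℂ} (hz : ‖z‖ ≤ 1) (n : ℕ) :
    ‖z ^ (n + 3) / (((n + 2 : ℕ) : ℂ) ^ 2 - 1)‖ ≤ (((n + 2 : ℕ) : ℝ) ^ 2 - 1)⁻¹ := by
  have hd : 0 < ((n + 2 : ℕ) : ℝ) ^ 2 - 1 :=
    zero_lt_one.trans_le (one_le_natCast_add_two_sq_sub_one n)
  have hnorm : ‖((n + 2 : ℕ) : ℂ) ^ 2 - 1‖ = ((n + 2 : ℕ) : ℝ) ^ 2 - 1 := by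
    rw [← abs_of_pos hd, ← Real.norm_eq_abs, ← Complex.norm_real]
    push_cast
    rfl
  rw [norm_div, norm_pow, hnorm, ← one_div]
  gcongr
  exact pow_le_one₀ (norm_nonneg z) hz

/- The exponent is `n + 3` rather than `n + 2` so that the value of the series needs no division by
`z`. The partial fractions are
`z ^ (n + 3) / ((n + 2) ^ 2 - 1) = (z ^ 2 * z ^ (n + 1) / (n + 1) - z ^ (n + 3) / (n + 3)) / 2`. -/
lemma hasSum_pow_add_three_div_of_norm_lt_one {z : ℂ} (hz : ‖z‖ < 1) :
    HasSum (fun n : ℕ ↦ z ^ (n + 3) / (((n + 2 : ℕ) : ℂ) ^ 2 - 1))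
      ((z + z ^ 2 / 2 - (z ^ 2 - 1) * log (1 - z)) / 2) := by
  have hlow := (hasSum_taylorSeries_neg_log' hz).mul_left (z ^ 2)
  have hhigh := (hasSum_nat_add_iff' 3).2 (hasSum_taylorSeries_neg_log hz)
  convert! (hlow.sub hhigh).div_const 2 using 1
  · funext n
    have hsucc : (n : ℂ) + 1 ≠ 0 := by exact_mod_cast n.succ_ne_zero
    have hadd_three : (n : ℂ) + 3 ≠ 0 := by exact_mod_cast (n + 2).succ_ne_zero
    push_cast
    rw [show ((n : ℂ) + 2) ^ 2 - 1 = (n + 1) * (n + 3) by ring]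
    field_simp
    ring
  · simp [Finset.sum_range_succ]
    ring

lemma one_sub_mem_slitPlane {z : ℂ} (hz : ‖z‖ ≤ 1) (hz1 : z ≠ 1) : 1 - z ∈ slitPlane := by
  by_contra h
  simp only [mem_slitPlane_iff, sub_re, one_re, sub_im, one_im, not_or, not_lt, not_not] at h
  exact hz1 (Complex.ext (by simpa using le_antisymm ((re_le_norm z).trans hz) (by linarith))
    (by simpa using h.2))

lemma hasSum_pow_add_three_div {z : ℂ} (hz : ‖z‖ ≤ 1) (hz1 : z ≠ 1) :
    HasSum (fun n : ℕ ↦ z ^ (n + 3) / (((n + 2 : ℕ) : ℂ) ^ 2 - 1))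
      ((z + z ^ 2 / 2 - (z ^ 2 - 1) * log (1 - z)) / 2) := by
  let t : Set ℂ := Metric.closedBall 0 1 \ {1}
  have hseries : ContinuousOn (fun w : ℂ ↦ ∑' n : ℕ, w ^ (n + 3) / (((n + 2 : ℕ) : ℂ) ^ 2 - 1)) t :=
    continuousOn_tsum (fun n ↦ by fun_prop) summable_inv_natCast_add_two_sq_sub_one
      fun n w hw ↦ norm_pow_add_three_div_le (mem_closedBall_zero_iff.1 hw.1) n
  have hclosed : ContinuousOn (fun w : ℂ ↦ (w + w ^ 2 / 2 - (w ^ 2 - 1) * log (1 - w)) / 2) t := by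
    have hlog : ContinuousOn (fun w : ℂ ↦ log (1 - w)) t :=
      ContinuousOn.clog (by fun_prop)
        fun w hw ↦ one_sub_mem_slitPlane (mem_closedBall_zero_iff.1 hw.1) hw.2
    fun_prop
  have heq := EqOn.of_subset_closure (s := Metric.ball 0 1)
    (fun w hw ↦ (hasSum_pow_add_three_div_of_norm_lt_one (mem_ball_zero_iff.1 hw)).tsum_eq)
    hseries hclosed
    (fun w hw ↦ ⟨Metric.ball_subset_closedBall hw, by rintro rfl; simp at hw⟩)
    (by rw [closure_ball (0 : ℂ) one_ne_zero]; exact sdiff_subset)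
  have hsum : Summable fun n : ℕ ↦ z ^ (n + 3) / (((n + 2 : ℕ) : ℂ) ^ 2 - 1) :=
    .of_norm_bounded summable_inv_natCast_add_two_sq_sub_one (norm_pow_add_three_div_le hz)
  exact hsum.hasSum_iff.2 (heq ⟨mem_closedBall_zero_iff.2 hz, hz1⟩)

lemma hasSum_cos_div_sq_sub_one {x : ℝ} (hx : exp (x * I) ≠ 1) :
    HasSum (fun n : ℕ ↦ Real.cos ((n + 2 : ℕ) * x) / (((n + 2 : ℕ) : ℝ) ^ 2 - 1))
      (1 / 2 + Real.cos x / 4 + Real.sin x * arg (1 - exp (x * I))) := by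
  have hsum := hasSum_re ((hasSum_pow_add_three_div (norm_exp_ofReal_mul_I x).le hx).mul_left
    (exp (x * I))⁻¹)
  convert! hsum using 1
  · funext n
    have hterm : (exp (x * I))⁻¹ * (exp (x * I) ^ (n + 3) / (((n + 2 : ℕ) : ℂ) ^ 2 - 1)) =
        exp (((n + 2 : ℕ) * x : ℝ) * I) / (((n + 2 : ℕ) : ℝ) ^ 2 - 1 : ℝ) := by
      rw [pow_succ', mul_div_assoc, inv_mul_cancel_left₀ (Complex.exp_ne_zero _),
        ← Complex.exp_nat_mul]
      push_cast
      ring_nf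
    rw [hterm, div_ofReal_re, exp_ofReal_mul_I_re]
  · have hsin : exp (x * I) - (exp (x * I))⁻¹ = 2 * Real.sin x * I := by
      rw [← Complex.exp_neg, ← neg_mul, exp_mul_I, exp_mul_I, Complex.cos_neg, Complex.sin_neg,
        ofReal_sin]
      ring
    have hvalue : (exp (x * I))⁻¹ * ((exp (x * I) + exp (x * I) ^ 2 / 2 -
          (exp (x * I) ^ 2 - 1) * log (1 - exp (x * I))) / 2) =
        1 / 2 + exp (x * I) / 4 - Real.sin x * (I * log (1 - exp (x * I))) := by
      have h := Complex.exp_ne_zero (x * I)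
      rw [show (Real.sin x : ℂ) * (I * log (1 - exp (x * I))) =
        2 * Real.sin x * I * log (1 - exp (x * I)) / 2 by ring, ← hsin]
      field_simp
      ring
    rw [hvalue, sub_re, re_ofReal_mul, I_mul_re, log_im]
    simp [exp_ofReal_mul_I_re]

lemma sin_mul_arg_one_sub_exp_neg {x : ℝ} (hx : Real.sin x ≠ 0) :
    Real.sin x * arg (1 - exp (x * I)) < 0 := by
  have him : (1 - exp (x * I)).im = -Real.sin x := by simp [exp_ofReal_mul_I_im]
  rcases hx.lt_or_gt with hneg | hpos
  · have hne : arg (1 - exp (x * I)) ≠ 0 := fun h ↦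
      hx (by simpa [him] using (arg_eq_zero_iff.1 h).2)
    exact mul_neg_of_neg_of_pos hneg ((arg_nonneg_iff.2 (by linarith)).lt_of_ne' hne)
  · exact mul_neg_of_pos_of_neg hpos (arg_neg_iff.2 (by linarith))

lemma tsum_cos_div_sq_sub_one_lt {x : ℝ} (hx : Real.sin x ≠ 0) :
    ∑' n : ℕ, Real.cos ((n + 2 : ℕ) * x) / (((n + 2 : ℕ) : ℝ) ^ 2 - 1)
      < 1 / 2 + Real.cos x / 4 := by
  have hexp : exp (x * I) ≠ 1 := fun h ↦ hx (by simpa using congrArg im h)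
  rw [(hasSum_cos_div_sq_sub_one hexp).tsum_eq]
  linarith [sin_mul_arg_one_sub_exp_neg hx]

end LogSeries

section CosineKernel

lemma integral_lt_integral_of_ae_lt {α : Type*} [MeasurableSpace α] {μ : Measure α} [NeZero μ]
    {f g : α → ℝ} (hf : Integrable f μ) (hg : Integrable g μ) (hfg : ∀ᵐ x ∂μ, f x < g x) :
    ∫ x, f x ∂μ < ∫ x, g x ∂μ := by
  have hle : f ≤ᵐ[μ] g := hfg.mono fun _ ↦ le_of_lt
  refine (integral_mono_ae hf hg hle).lt_of_ne fun h ↦ ?_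
  obtain ⟨x, hlt, heq⟩ := (hfg.and ((integral_eq_iff_of_ae_le hf hg hle).1 h)).exists
  exact hlt.ne heq

lemma neZero_prod {α β : Type*} [MeasurableSpace α] [MeasurableSpace β] (μ : Measure α)
    (ν : Measure β) [SFinite ν] [NeZero μ] [NeZero ν] : NeZero (μ.prod ν) :=
  ⟨by simp [← Measure.measure_univ_eq_zero, ← univ_prod_univ, NeZero.ne]⟩

variable (μ ν : Measure ℝ)

lemma ae_prod_sin_sub_ne_zero [SFinite ν] [NullSingletonClass ν] :
    ∀ᵐ p ∂μ.prod ν, sin (p.1 - p.2) ≠ 0 := by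
  have hmeas : MeasurableSet {p : ℝ × ℝ | sin (p.1 - p.2) ≠ 0} :=
    (isOpen_ne_fun (by fun_prop) continuous_const).measurableSet
  refine (Measure.ae_prod_iff_ae_ae hmeas).2 (.of_forall fun s ↦ ?_)
  have hcount : (range fun n : ℤ ↦ s - n * π).Countable := countable_range _
  filter_upwards [hcount.ae_notMem ν] with t ht
  exact sin_ne_zero_iff.2 fun n hn ↦ ht ⟨n, by linarith⟩

variable [IsFiniteMeasure μ] [IsFiniteMeasure ν]

lemma integrable_cos_mul_sub_prod (ω : ℝ) :
    Integrable (fun p : ℝ × ℝ ↦ cos (ω * (p.1 - p.2))) (μ.prod ν) :=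
  .of_bound (by fun_prop) 1 (.of_forall fun _ ↦ abs_cos_le_one _)

lemma integral_cos_mul_sub_prod (ω : ℝ) :
    ∫ p, cos (ω * (p.1 - p.2)) ∂μ.prod ν =
      (∫ x, cos (ω * x) ∂μ) * (∫ x, cos (ω * x) ∂ν) +
        (∫ x, sin (ω * x) ∂μ) * ∫ x, sin (ω * x) ∂ν := by
  have hcos (ρ : Measure ℝ) [IsFiniteMeasure ρ] : Integrable (fun x ↦ cos (ω * x)) ρ :=
    .of_bound (by fun_prop) 1 (.of_forall fun _ ↦ abs_cos_le_one _)
  have hsin (ρ : Measure ℝ) [IsFiniteMeasure ρ] : Integrable (fun x ↦ sin (ω * x)) ρ :=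
    .of_bound (by fun_prop) 1 (.of_forall fun _ ↦ abs_sin_le_one _)
  simp_rw [mul_sub, cos_sub]
  rw [integral_add ((hcos μ).mul_prod (hcos ν)) ((hsin μ).mul_prod (hsin ν)),
    integral_prod_mul (fun x ↦ cos (ω * x)) fun x ↦ cos (ω * x),
    integral_prod_mul (fun x ↦ sin (ω * x)) fun x ↦ sin (ω * x)]

lemma norm_cos_div_le (x d : ℝ) : ‖cos x / d‖ ≤ |d⁻¹| := by
  rw [div_eq_mul_inv, norm_mul]
  exact mul_le_of_le_one_left (abs_nonneg _) (abs_cos_le_one x)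

variable {ι : Type*} {d : ι → ℝ} (ω : ι → ℝ)

lemma hasSum_integral_tsum_cos_prod [Countable ι] (hd : Summable fun i ↦ (d i)⁻¹) :
    HasSum (fun i ↦ ((∫ x, cos (ω i * x) ∂μ) * (∫ x, cos (ω i * x) ∂ν) +
        (∫ x, sin (ω i * x) ∂μ) * ∫ x, sin (ω i * x) ∂ν) / d i)
      (∫ p, ∑' i, cos (ω i * (p.1 - p.2)) / d i ∂μ.prod ν) := by
  simp_rw [← integral_cos_mul_sub_prod, ← integral_div]
  refine hasSum_integral_of_summable_integral_norm
    (fun i ↦ (integrable_cos_mul_sub_prod μ ν (ω i)).div_const (d i)) ?_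
  exact (hd.abs.mul_right ((μ.prod ν).real univ)).of_norm_bounded fun i ↦
    norm_integral_le_of_norm_le_const <| .of_forall fun p ↦ by
      simpa only [norm_norm] using norm_cos_div_le _ (d i)

lemma integrable_tsum_cos_prod (hd : Summable fun i ↦ (d i)⁻¹) :
    Integrable (fun p : ℝ × ℝ ↦ ∑' i, cos (ω i * (p.1 - p.2)) / d i) (μ.prod ν) := by
  have hbound (i : ι) (p : ℝ × ℝ) : ‖cos (ω i * (p.1 - p.2)) / d i‖ ≤ |(d i)⁻¹| :=
    norm_cos_div_le _ (d i)
  exact .of_bound (continuous_tsum (fun i ↦ by fun_prop) hd.abs hbound).aestronglyMeasurable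
    (∑' i, |(d i)⁻¹|) (.of_forall fun p ↦ tsum_of_norm_bounded hd.abs.hasSum (hbound · p))

lemma tsum_sq_integral_cos_add_sq_integral_sin_div_lt [NullSingletonClass μ] [NeZero μ] :
    ∑' n : ℕ, ((∫ x, cos ((n + 2 : ℕ) * x) ∂μ) ^ 2 + (∫ x, sin ((n + 2 : ℕ) * x) ∂μ) ^ 2) /
        (((n + 2 : ℕ) : ℝ) ^ 2 - 1)
      < μ.real univ ^ 2 / 2 + ((∫ x, cos x ∂μ) ^ 2 + (∫ x, sin x ∂μ) ^ 2) / 4 := by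
  have hsummable := summable_inv_natCast_add_two_sq_sub_one
  have hcos : Integrable (fun p : ℝ × ℝ ↦ cos (p.1 - p.2) / 4) (μ.prod μ) := by
    simpa using (integrable_cos_mul_sub_prod μ μ 1).div_const 4
  have := neZero_prod μ μ
  calc
    _ = ∫ p, ∑' n : ℕ, cos ((n + 2 : ℕ) * (p.1 - p.2)) / (((n + 2 : ℕ) : ℝ) ^ 2 - 1)
          ∂μ.prod μ := by
      simpa only [sq (∫ _, _ ∂μ)] using
        (hasSum_integral_tsum_cos_prod μ μ (fun n : ℕ ↦ ((n + 2 : ℕ) : ℝ)) hsummable).tsum_eq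
    _ < ∫ p, 1 / 2 + cos (p.1 - p.2) / 4 ∂μ.prod μ := by
      refine integral_lt_integral_of_ae_lt (integrable_tsum_cos_prod μ μ _ hsummable)
        ((integrable_const _).add hcos) ?_
      filter_upwards [ae_prod_sin_sub_ne_zero μ μ] with p hp using tsum_cos_div_sq_sub_one_lt hp
    _ = _ := by
      have hprod := integral_cos_mul_sub_prod μ μ 1
      simp only [one_mul] at hprod
      rw [integral_add (integrable_const _) hcos, integral_div 4, hprod, integral_const,
        ← univ_prod_univ, measureReal_prod_prod, smul_eq_mul]
      ring

end CosineKernel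

lemma integral_withDensity_ofReal {α : Type*} [MeasurableSpace α] {μ : Measure α} {f : α → ℝ}
    (hf : AEMeasurable f μ) (hf0 : 0 ≤ᵐ[μ] f) (g : α → ℝ) :
    ∫ x, g x ∂μ.withDensity (fun x ↦ ENNReal.ofReal (f x)) = ∫ x, f x * g x ∂μ := by
  rw [integral_withDensity_eq_integral_toReal_smul₀ hf.ennreal_ofReal (by simp)]
  exact integral_congr_ae (hf0.mono fun x hx ↦ by simp [ENNReal.toReal_ofReal hx])

theorem fourier_coefficient_strict_inequality_general
    (f : ℝ → ℝ)
    (hf_int : IntervalIntegrable f volume 0 (2 * π))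
    (hf_nonneg : ∀ᵐ θ ∂volume.restrict (Ioc 0 (2 * π)), 0 ≤ f θ)
    (hf_pos : 0 < ∫ θ in (0 : ℝ)..(2 * π), f θ)
    (a₀ a₁ b₁ : ℝ) (a b : ℕ → ℝ)
    (ha₀ : a₀ = (1 / π) * ∫ θ in (0 : ℝ)..(2 * π), f θ)
    (ha₁ : a₁ = (1 / π) * ∫ θ in (0 : ℝ)..(2 * π), f θ * Real.cos θ)
    (hb₁ : b₁ = (1 / π) * ∫ θ in (0 : ℝ)..(2 * π), f θ * Real.sin θ)
    (ha : ∀ n, 2 ≤ n → a n = (1 / π) * ∫ θ in (0 : ℝ)..(2 * π), f θ * Real.cos (n * θ))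
    (hb : ∀ n, 2 ≤ n → b n = (1 / π) * ∫ θ in (0 : ℝ)..(2 * π), f θ * Real.sin (n * θ)) :
    (∑' n : ℕ, ((a (n + 2)) ^ 2 + (b (n + 2)) ^ 2) / (((n + 2 : ℕ) : ℝ) ^ 2 - 1))
      < a₀ ^ 2 / 2 + (a₁ ^ 2 + b₁ ^ 2) / 4 := by
  let μ : Measure ℝ := (volume.restrict (Ioc 0 (2 * π))).withDensity fun θ ↦ ENNReal.ofReal (f θ)
  have hf : IntegrableOn f (Ioc 0 (2 * π)) := hf_int.1
  have hμ (g : ℝ → ℝ) : ∫ θ in (0 : ℝ)..(2 * π), f θ * g θ = ∫ θ, g θ ∂μ := by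
    rw [integral_withDensity_ofReal hf.aemeasurable hf_nonneg,
      intervalIntegral.integral_of_le two_pi_pos.le]
  have hmass : ∫ θ in (0 : ℝ)..(2 * π), f θ = μ.real univ := by simpa using hμ 1
  have : IsFiniteMeasure μ := isFiniteMeasure_withDensity_ofReal hf.2
  have : NeZero μ := ⟨fun h ↦ by simp [hmass, h] at hf_pos⟩
  have hterm (n : ℕ) : (a (n + 2) ^ 2 + b (n + 2) ^ 2) / (((n + 2 : ℕ) : ℝ) ^ 2 - 1) =
      (1 / π) ^ 2 * (((∫ x, cos ((n + 2 : ℕ) * x) ∂μ) ^ 2 +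
        (∫ x, sin ((n + 2 : ℕ) * x) ∂μ) ^ 2) / (((n + 2 : ℕ) : ℝ) ^ 2 - 1)) := by
    rw [ha _ (by omega), hb _ (by omega), hμ, hμ]
    ring
  simp_rw [hterm, tsum_mul_left, ha₀, ha₁, hb₁, hμ, hmass]
  calc
    _ < _ := mul_lt_mul_of_pos_left (tsum_sq_integral_cos_add_sq_integral_sin_div_lt μ)
      (by positivity)
    _ = _ := by ring

theorem fourier_coefficient_strict_inequality
    (f : ℝ → ℝ)
    (hf_pos : ∀ θ, 0 < f θ)
    (hf_per : ∀ θ, f (θ + 2 * π) = f θ)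
    (hf_C1 : ContDiff ℝ 1 f)
    (hf_cos : ∫ θ in (0:ℝ)..(2 * π), f θ * Real.cos θ = 0)
    (hf_sin : ∫ θ in (0:ℝ)..(2 * π), f θ * Real.sin θ = 0)
    (a₀ : ℝ) (a b : ℕ → ℝ)
    (ha₀ : a₀ = (1 / π) * ∫ θ in (0:ℝ)..(2 * π), f θ)
    (ha : ∀ n, 2 ≤ n → a n = (1 / π) * ∫ θ in (0:ℝ)..(2 * π), f θ * Real.cos (n * θ))
    (hb : ∀ n, 2 ≤ n → b n = (1 / π) * ∫ θ in (0:ℝ)..(2 * π), f θ * Real.sin (n * θ)) :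
    (∑' n : ℕ, ((a (n + 2)) ^ 2 + (b (n + 2)) ^ 2) / (((n + 2 : ℕ) : ℝ) ^ 2 - 1))
      < a₀ ^ 2 / 2 := by
  have hf := hf_C1.continuous.intervalIntegrable (μ := volume) 0 (2 * π)
  simpa using fourier_coefficient_strict_inequality_general f hf (.of_forall fun θ ↦ (hf_pos θ).le)
    (intervalIntegral.intervalIntegral_pos_of_pos hf hf_pos two_pi_pos)
    a₀ 0 0 a b ha₀ (by simp [hf_cos]) (by simp [hf_sin]) ha hb
end

section
/- Let f : ℝ → ℝ be a positive continuous 2π-periodic function. Suppose u₁, u₂ : ℝ → ℝ are 2π-periodic C² functions with ∫₀^{2π} f u₁ dθ = ∫₀^{2π} f u₂ dθ = 0, and suppose there exist real constants μ₁ ≠ μ₂ and c₁, c₂ such that u₁'' + μ₁u₁ = c₁ f and u₂'' + μ₂u₂ = c₂ f on ℝ. Then ∫₀^{2π} u₁(θ)u₂(θ) dθ = 0. -/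
open Real

/-!
Write `L u = u''`. On periodic functions `L` is symmetric for the pairing `∫ u v`, as integrating by
parts twice leaves no boundary terms. An `f`-eigenfunction satisfies `L u = -μ u + c f`, and the
term `c f` is invisible when paired with any `v` such that `∫ f v = 0`. Hence
`-μ₁ ∫ u₁ u₂ = ∫ (L u₁) u₂ = ∫ u₁ (L u₂) = -μ₂ ∫ u₁ u₂`, which is the usual argument for
eigenvectors of a symmetric operator.
-/

section Periodic

theorem periodic_deriv {𝕜 F : Type*} [NontriviallyNormedField 𝕜] [NormedAddCommGroup F]
    [NormedSpace 𝕜 F] {u : 𝕜 → F} {T : 𝕜} (hu : Function.Periodic u T) :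
    Function.Periodic (deriv u) T := fun x => by
  rw [← deriv_comp_add_const, hu.funext]

variable {A : Type*} [NormedRing A] [NormedAlgebra ℝ A] [CompleteSpace A] {u v : ℝ → A} {T : ℝ}

theorem integral_mul_deriv_of_periodic (hu : ContDiff ℝ 1 u) (hv : ContDiff ℝ 1 v)
    (hu_per : Function.Periodic u T) (hv_per : Function.Periodic v T) (a : ℝ) :
    ∫ x in a..a + T, u x * deriv v x = -∫ x in a..a + T, deriv u x * v x := by
  rw [intervalIntegral.integral_mul_deriv_eq_deriv_mul
      (fun x _ => (hu.differentiable one_ne_zero x).hasDerivAt)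
      (fun x _ => (hv.differentiable one_ne_zero x).hasDerivAt)
      (hu.continuous_deriv_one.intervalIntegrable a (a + T))
      (hv.continuous_deriv_one.intervalIntegrable a (a + T)),
    hu_per a, hv_per a, sub_self, zero_sub]

theorem integral_deriv_deriv_mul_of_periodic (hu : ContDiff ℝ 2 u) (hv : ContDiff ℝ 2 v)
    (hu_per : Function.Periodic u T) (hv_per : Function.Periodic v T) (a : ℝ) :
    ∫ x in a..a + T, deriv (deriv u) x * v x = ∫ x in a..a + T, u x * deriv (deriv v) x := by
  rw [integral_mul_deriv_of_periodic (hu.of_le one_le_two) hv.deriv' hu_per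
      (periodic_deriv hv_per),
    integral_mul_deriv_of_periodic hu.deriv' (hv.of_le one_le_two) (periodic_deriv hu_per) hv_per,
    neg_neg]

end Periodic

/-- The `T`-periodic function `u` is an `f`-eigenfunction with `f`-eigenvalue `μ`, that is,
`Δu ≡ -μu` modulo `f`, on the circle of length `T`. The pairing `∫ f u` is bilinear, without
conjugation when `𝕜 = ℂ`. -/
structure IsFEigenfunction {𝕜 : Type*} [RCLike 𝕜] (f : ℝ → 𝕜) (T : ℝ) (μ : 𝕜) (u : ℝ → 𝕜) :
    Prop where
  contDiff : ContDiff ℝ 2 u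
  periodic : Function.Periodic u T
  integral_eq_zero : ∫ θ in (0 : ℝ)..T, f θ * u θ = 0
  exists_deriv_deriv_add : ∃ c, ∀ θ, deriv (deriv u) θ + μ * u θ = c * f θ

section FEigenfunction

variable {𝕜 : Type*} [RCLike 𝕜] {f u v u₁ u₂ : ℝ → 𝕜} {T : ℝ} {μ μ₁ μ₂ : 𝕜}

theorem IsFEigenfunction.integral_deriv_deriv_mul (hu : IsFEigenfunction f T μ u)
    (hv : Continuous v) (hfv : ∫ θ in (0 : ℝ)..T, f θ * v θ = 0) :
    ∫ θ in (0 : ℝ)..T, deriv (deriv u) θ * v θ = -μ * ∫ θ in (0 : ℝ)..T, u θ * v θ := by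
  obtain ⟨c, hc⟩ := hu.exists_deriv_deriv_add
  have hu_cont : Continuous u := hu.contDiff.continuous
  have hu''_cont : Continuous (deriv (deriv u)) := hu.contDiff.deriv'.continuous_deriv_one
  have h_sum : (∫ θ in (0 : ℝ)..T, deriv (deriv u) θ * v θ) +
      μ * ∫ θ in (0 : ℝ)..T, u θ * v θ = 0 := calc
    _ = ∫ θ in (0 : ℝ)..T, (deriv (deriv u) θ * v θ + μ * (u θ * v θ)) := by
      rw [intervalIntegral.integral_add (Continuous.intervalIntegrable (by fun_prop) 0 T)
        (Continuous.intervalIntegrable (by fun_prop) 0 T), intervalIntegral.integral_const_mul]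
    _ = ∫ θ in (0 : ℝ)..T, c * (f θ * v θ) := by
      congr with θ
      linear_combination v θ * hc θ
    _ = 0 := by rw [intervalIntegral.integral_const_mul, hfv, mul_zero]
  linear_combination h_sum

theorem f_eigenfunctions_orthogonal_general (h₁ : IsFEigenfunction f T μ₁ u₁)
    (h₂ : IsFEigenfunction f T μ₂ u₂) (hμ : μ₁ ≠ μ₂) :
    ∫ θ in (0 : ℝ)..T, u₁ θ * u₂ θ = 0 := by
  have h_symm : ∫ θ in (0 : ℝ)..T, deriv (deriv u₁) θ * u₂ θ =
      ∫ θ in (0 : ℝ)..T, deriv (deriv u₂) θ * u₁ θ := by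
    simpa only [zero_add, mul_comm (u₁ _)] using
      integral_deriv_deriv_mul_of_periodic h₁.contDiff h₂.contDiff h₁.periodic h₂.periodic 0
  rw [h₁.integral_deriv_deriv_mul h₂.contDiff.continuous h₂.integral_eq_zero,
    h₂.integral_deriv_deriv_mul h₁.contDiff.continuous h₁.integral_eq_zero] at h_symm
  simp only [mul_comm (u₂ _)] at h_symm
  exact (mul_eq_mul_right_iff.mp h_symm).resolve_left (neg_injective.ne hμ)

end FEigenfunction

theorem f_eigenfunctions_orthogonal
    (f u₁ u₂ : ℝ → ℝ)
    (hf_pos : ∀ θ, 0 < f θ)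
    (hf_cont : Continuous f)
    (hf_per : ∀ θ, f (θ + 2 * π) = f θ)
    (hu₁_per : ∀ θ, u₁ (θ + 2 * π) = u₁ θ)
    (hu₂_per : ∀ θ, u₂ (θ + 2 * π) = u₂ θ)
    (hu₁_C2 : ContDiff ℝ 2 u₁)
    (hu₂_C2 : ContDiff ℝ 2 u₂)
    (hfu₁ : ∫ θ in (0:ℝ)..(2 * π), f θ * u₁ θ = 0)
    (hfu₂ : ∫ θ in (0:ℝ)..(2 * π), f θ * u₂ θ = 0)
    (μ₁ μ₂ c₁ c₂ : ℝ) (hμ : μ₁ ≠ μ₂)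
    (heq₁ : ∀ θ, deriv (deriv u₁) θ + μ₁ * u₁ θ = c₁ * f θ)
    (heq₂ : ∀ θ, deriv (deriv u₂) θ + μ₂ * u₂ θ = c₂ * f θ) :
    ∫ θ in (0:ℝ)..(2 * π), u₁ θ * u₂ θ = 0 := by
  exact f_eigenfunctions_orthogonal_general ⟨hu₁_C2, hu₁_per, hfu₁, c₁, heq₁⟩
    ⟨hu₂_C2, hu₂_per, hfu₂, c₂, heq₂⟩ hμ
end

section
/- Fix n ≥ 1. Let f : ℝⁿ → ℝ be a positive continuous function that is 2π-periodic in each coordinate, and let u : ℝⁿ → ℝ be a C¹ function, 2π-periodic in each coordinate, with ∫_{[0,2π]ⁿ} f u dx = 0. Then ∫_{[0,2π]ⁿ} |∇u|² dx ≥ [(∫_{[0,2π]ⁿ} f dx)² / ((2π)ⁿ · ∫_{[0,2π]ⁿ} f² dx)] · ∫_{[0,2π]ⁿ} u² dx. -/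
open Real MeasureTheory

/-!
Normalize Lebesgue measure on the box `[0, 2π]ⁿ` to a product probability measure `P`, with
expectation `E`. The hypothesis `E (f u) = 0` says `Cov(f, u) = -E f * E u`, so the Cauchy–Schwarz
inequality `Cov(f, u)² ≤ Var f * Var u` rearranges to `(E f)² * E u² ≤ E f² * Var u`. It remains to
see that `Var u ≤ E |∇u|²`: by Parseval this holds for periodic functions of one variable
(Wirtinger), and variance under a product measure is at most the sum of the mean variances along
the coordinates.
-/

open ProbabilityTheory Function

section Variance

variable {Ω : Type*} {mΩ : MeasurableSpace Ω} {P : Measure Ω} [IsProbabilityMeasure P]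

lemma sq_integral_le_integral_sq {X : Ω → ℝ} (hX : MemLp X 2 P) :
    (∫ ω, X ω ∂P) ^ 2 ≤ ∫ ω, X ω ^ 2 ∂P := by
  simpa [variance_eq_sub hX] using variance_nonneg X P

lemma sq_covariance_le_variance_mul_variance {X Y : Ω → ℝ}
    (hX : MemLp X 2 P) (hY : MemLp Y 2 P) :
    cov[X, Y; P] ^ 2 ≤ Var[X; P] * Var[Y; P] := by
  have h_nonneg (t : ℝ) : 0 ≤ Var[X; P] * (t * t) + 2 * cov[X, Y; P] * t + Var[Y; P] := by
    have h := variance_nonneg (t • X + Y) P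
    rw [variance_add (hX.const_smul t) hY, variance_smul, covariance_smul_left] at h
    linarith
  have h := discrim_le_zero h_nonneg
  rw [discrim] at h
  linarith

theorem sq_integral_mul_integral_sq_le_of_integral_mul_eq_zero {f u : Ω → ℝ}
    (hf : MemLp f 2 P) (hu : MemLp u 2 P) (hfu : ∫ ω, f ω * u ω ∂P = 0) :
    (∫ ω, f ω ∂P) ^ 2 * ∫ ω, u ω ^ 2 ∂P ≤ (∫ ω, f ω ^ 2 ∂P) * Var[u; P] := by
  have h_cov : cov[f, u; P] = -((∫ ω, f ω ∂P) * ∫ ω, u ω ∂P) := by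
    simp [covariance_eq_sub hf hu, hfu]
  have h_cs := sq_covariance_le_variance_mul_variance hf hu
  rw [h_cov, variance_eq_sub hf, variance_eq_sub hu] at h_cs
  rw [variance_eq_sub hu]
  simp only [Pi.pow_apply] at h_cs ⊢
  linarith

end Variance

lemma integral_sq_pos_of_not_ae_eq_zero {Ω : Type*} {mΩ : MeasurableSpace Ω} {μ : Measure Ω}
    {f : Ω → ℝ} (hf : MemLp f 2 μ) (hf_ne : ¬ f =ᵐ[μ] 0) : 0 < ∫ ω, f ω ^ 2 ∂μ := by
  have h_nonneg : 0 ≤ fun ω ↦ f ω ^ 2 := fun ω ↦ sq_nonneg (f ω)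
  refine (integral_nonneg h_nonneg).lt_of_ne' fun h ↦ hf_ne ?_
  filter_upwards [(integral_eq_zero_iff_of_nonneg h_nonneg hf.integrable_sq).1 h] with ω hω
  exact (pow_eq_zero_iff two_ne_zero).1 hω

section Product

variable {α β : Type*} {mα : MeasurableSpace α} {mβ : MeasurableSpace β}
  {μ : Measure α} {ν : Measure β} {u : α × β → ℝ}

lemma ae_memLp_two_prodMk_left [SFinite μ] [SFinite ν] (hu : MemLp u 2 (μ.prod ν)) :
    ∀ᵐ x ∂μ, MemLp (fun y ↦ u (x, y)) 2 ν := by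
  filter_upwards [hu.aestronglyMeasurable.prodMk_left, hu.integrable_sq.prod_right_ae]
    with x h_meas h_int
  exact (memLp_two_iff_integrable_sq h_meas).2 h_int

lemma memLp_two_integral_prod_left [SFinite μ] [IsProbabilityMeasure ν]
    (hu : MemLp u 2 (μ.prod ν)) : MemLp (fun x ↦ ∫ y, u (x, y) ∂ν) 2 μ := by
  have h_meas := hu.aestronglyMeasurable.integral_prod_right'
  refine (memLp_two_iff_integrable_sq h_meas).2 <|
    hu.integrable_sq.integral_prod_left.mono' (h_meas.pow 2) ?_
  filter_upwards [ae_memLp_two_prodMk_left hu] with x hx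
  simpa using sq_integral_le_integral_sq hx

lemma ae_variance_prodMk_left_eq_sub [SFinite μ] [IsProbabilityMeasure ν]
    (hu : MemLp u 2 (μ.prod ν)) :
    (fun x ↦ Var[fun y ↦ u (x, y); ν]) =ᵐ[μ]
      fun x ↦ (∫ y, u (x, y) ^ 2 ∂ν) - (∫ y, u (x, y) ∂ν) ^ 2 := by
  filter_upwards [ae_memLp_two_prodMk_left hu] with x hx
  simp [variance_eq_sub hx]

variable [IsProbabilityMeasure μ] [IsProbabilityMeasure ν]

theorem variance_prod (hu : MemLp u 2 (μ.prod ν)) :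
    Var[u; μ.prod ν] =
      (∫ x, Var[fun y ↦ u (x, y); ν] ∂μ) + Var[fun x ↦ ∫ y, u (x, y) ∂ν; μ] := by
  have h_mean := memLp_two_integral_prod_left hu
  rw [integral_congr_ae (ae_variance_prodMk_left_eq_sub hu),
    integral_sub hu.integrable_sq.integral_prod_left h_mean.integrable_sq,
    variance_eq_sub hu, variance_eq_sub h_mean, integral_prod _ (hu.integrable one_le_two)]
  simp only [Pi.pow_apply, integral_prod _ hu.integrable_sq]
  ring

lemma variance_prod_swap (hu : MemLp u 2 (μ.prod ν)) :
    Var[u; μ.prod ν] =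
      (∫ y, Var[fun x ↦ u (x, y); μ] ∂ν) + Var[fun y ↦ ∫ x, u (x, y) ∂μ; ν] := by
  rw [← Measure.measurePreserving_swap.variance_fun_comp hu.aemeasurable]
  exact variance_prod (hu.comp_measurePreserving Measure.measurePreserving_swap)

theorem variance_integral_le_integral_variance (hu : MemLp u 2 (μ.prod ν)) :
    Var[fun x ↦ ∫ y, u (x, y) ∂ν; μ] ≤ ∫ y, Var[fun x ↦ u (x, y); μ] ∂ν := by
  have hu_swap : MemLp (fun z : β × α ↦ u (z.2, z.1)) 2 (ν.prod μ) :=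
    hu.comp_measurePreserving Measure.measurePreserving_swap
  have h_mean : MemLp (fun y ↦ ∫ x, u (x, y) ∂μ) 2 ν := memLp_two_integral_prod_left hu_swap
  -- Subtracting the mean over `x` kills the second term of the law of total variance given `y`.
  let w : α × β → ℝ := fun z ↦ u z - ∫ x, u (x, z.2) ∂μ
  have hw : MemLp w 2 (μ.prod ν) := hu.sub (h_mean.comp_snd μ)
  have h_centered : (fun y ↦ ∫ x, w (x, y) ∂μ) =ᵐ[ν] 0 := by
    filter_upwards [ae_memLp_two_prodMk_left hu_swap] with y hy
    change ∫ x, (u (x, y) - ∫ x', u (x', y) ∂μ) ∂μ = 0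
    rw [integral_sub (hy.integrable one_le_two) (integrable_const _)]
    simp
  calc Var[fun x ↦ ∫ y, u (x, y) ∂ν; μ]
      = Var[fun x ↦ ∫ y, w (x, y) ∂ν; μ] := by
        rw [← variance_sub_const (memLp_two_integral_prod_left hu).aestronglyMeasurable
          (∫ y, ∫ x, u (x, y) ∂μ ∂ν)]
        refine variance_congr ?_
        filter_upwards [ae_memLp_two_prodMk_left hu] with x hx
        rw [integral_sub (hx.integrable one_le_two) (h_mean.integrable one_le_two)]
    _ ≤ Var[w; μ.prod ν] := by
        rw [variance_prod hw]
        exact le_add_of_nonneg_left (integral_nonneg fun x ↦ variance_nonneg _ _)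
    _ = ∫ y, Var[fun x ↦ w (x, y); μ] ∂ν := by
        rw [variance_prod_swap hw, variance_congr h_centered, variance_zero, add_zero]
    _ = ∫ y, Var[fun x ↦ u (x, y); μ] ∂ν := by
        refine integral_congr_ae ?_
        filter_upwards [ae_memLp_two_prodMk_left hu_swap] with y hy
        exact variance_sub_const hy.aestronglyMeasurable (∫ x, u (x, y) ∂μ)

theorem variance_prod_le (hu : MemLp u 2 (μ.prod ν)) :
    Var[u; μ.prod ν] ≤
      (∫ x, Var[fun y ↦ u (x, y); ν] ∂μ) + ∫ y, Var[fun x ↦ u (x, y); μ] ∂ν :=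
  (variance_prod hu).trans_le (by gcongr; exact variance_integral_le_integral_variance hu)

end Product

section Pi

lemma measurePreserving_finCons {n : ℕ} {X : Fin (n + 1) → Type*} {mX : ∀ i, MeasurableSpace (X i)}
    (μ : ∀ i, Measure (X i)) [∀ i, SigmaFinite (μ i)] :
    MeasurePreserving (fun z : X 0 × (∀ i : Fin n, X i.succ) ↦ (Fin.cons z.1 z.2 : ∀ i, X i))
      ((μ 0).prod (Measure.pi fun i ↦ μ i.succ)) (Measure.pi μ) := by
  convert! (measurePreserving_piFinSuccAbove μ 0).symm using 1
  exact funext fun z ↦ (Fin.insertNth_zero z.1 z.2).symm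

lemma integral_pi_eq_integral_integral_finCons {n : ℕ} {X : Fin (n + 1) → Type*}
    {mX : ∀ i, MeasurableSpace (X i)} {μ : ∀ i, Measure (X i)} [∀ i, SigmaFinite (μ i)]
    {F : (∀ i, X i) → ℝ} (hF : Integrable F (Measure.pi μ)) :
    ∫ x, F x ∂Measure.pi μ =
      ∫ t, ∫ y, F (Fin.cons t y) ∂(Measure.pi fun i : Fin n ↦ μ i.succ) ∂μ 0 := by
  have h_cons := measurePreserving_finCons μ
  rw [← integral_prod (fun z : X 0 × (∀ i : Fin n, X i.succ) ↦ F (Fin.cons z.1 z.2))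
    (h_cons.integrable_comp_of_integrable hF), ← h_cons.map_eq, integral_map h_cons.aemeasurable
    (h_cons.map_eq ▸ hF.aestronglyMeasurable)]

theorem variance_pi_le_sum_integral {n : ℕ} {X : Fin n → Type*} {mX : ∀ i, MeasurableSpace (X i)}
    {μ : ∀ i, Measure (X i)} [∀ i, IsProbabilityMeasure (μ i)]
    {u : (∀ i, X i) → ℝ} {G : Fin n → (∀ i, X i) → ℝ}
    (hu : MemLp u 2 (Measure.pi μ)) (hG : ∀ i, Integrable (G i) (Measure.pi μ))
    (h_le : ∀ i x, Var[fun t ↦ u (update x i t); μ i] ≤ ∫ t, G i (update x i t) ∂μ i) :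
    Var[u; Measure.pi μ] ≤ ∑ i, ∫ x, G i x ∂Measure.pi μ := by
  induction n with
  | zero =>
    obtain ⟨c, rfl⟩ : ∃ c, u = fun _ ↦ c :=
      ⟨u default, funext fun x ↦ by rw [Subsingleton.elim x default]⟩
    simp [variance, evariance]
  | succ n ih =>
    set ν := Measure.pi fun i : Fin n ↦ μ i.succ
    have h_cons := measurePreserving_finCons μ
    have hu' : MemLp (fun z ↦ u (Fin.cons z.1 z.2)) 2 ((μ 0).prod ν) :=
      hu.comp_measurePreserving h_cons
    have hG' i : Integrable (fun z ↦ G i (Fin.cons z.1 z.2)) ((μ 0).prod ν) :=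
      h_cons.integrable_comp_of_integrable (hG i)
    have h_integral i := integral_pi_eq_integral_integral_finCons (hG i)
    have h_head : ∫ y, Var[fun t ↦ u (Fin.cons t y); μ 0] ∂ν ≤ ∫ x, G 0 x ∂Measure.pi μ := by
      rw [h_integral 0, integral_integral_swap (hG' 0)]
      refine integral_mono_of_nonneg (.of_forall fun y ↦ variance_nonneg _ _)
        (hG' 0).integral_prod_right (.of_forall fun y ↦ ?_)
      obtain ⟨t₀⟩ := (μ 0).nonempty_of_neZero
      simpa using h_le 0 (Fin.cons t₀ y)
    have h_tail : ∫ t, Var[fun y ↦ u (Fin.cons t y); ν] ∂μ 0 ≤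
        ∑ i : Fin n, ∫ x, G i.succ x ∂Measure.pi μ := by
      simp_rw [h_integral]
      rw [← integral_finsetSum _ fun i _ ↦ (hG' i.succ).integral_prod_left]
      refine integral_mono_of_nonneg (.of_forall fun t ↦ variance_nonneg _ _)
        (integrable_finsetSum _ fun i _ ↦ (hG' i.succ).integral_prod_left) ?_
      filter_upwards [ae_memLp_two_prodMk_left hu', ae_all_iff.2 fun i ↦ (hG' i).prod_right_ae]
        with t hut hGt
      refine ih hut (fun i ↦ hGt i.succ) fun i y ↦ ?_
      simpa only [Fin.cons_update] using h_le i.succ (Fin.cons t y)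
    calc Var[u; Measure.pi μ]
        = Var[fun z ↦ u (Fin.cons z.1 z.2); (μ 0).prod ν] :=
          (h_cons.variance_fun_comp hu.aemeasurable).symm
      _ ≤ (∫ t, Var[fun y ↦ u (Fin.cons t y); ν] ∂μ 0) +
          ∫ y, Var[fun t ↦ u (Fin.cons t y); μ 0] ∂ν := variance_prod_le hu'
      _ ≤ (∑ i : Fin n, ∫ x, G i.succ x ∂Measure.pi μ) + ∫ x, G 0 x ∂Measure.pi μ :=
          add_le_add h_tail h_head
      _ = ∑ i, ∫ x, G i x ∂Measure.pi μ := by rw [Fin.sum_univ_succ, add_comm]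

end Pi

section Cond

variable {Ω E : Type*} {mΩ : MeasurableSpace Ω} [NormedAddCommGroup E] {μ : Measure Ω} {s : Set Ω}

lemma integral_cond [NormedSpace ℝ E] (g : Ω → E) :
    ∫ ω, g ω ∂μ[|s] = (μ.real s)⁻¹ • ∫ ω in s, g ω ∂μ := by
  rw [ProbabilityTheory.cond, integral_smul_measure, ENNReal.toReal_inv, measureReal_def]

lemma memLp_cond_of_memLp_restrict {g : Ω → E} {p : ENNReal} (hg : MemLp g p (μ.restrict s))
    (hs : μ s ≠ 0) : MemLp g p (μ[|s]) :=
  hg.smul_measure (ENNReal.inv_ne_top.2 hs)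

lemma memLp_restrict_of_continuousOn_of_isCompact [TopologicalSpace Ω] [OpensMeasurableSpace Ω]
    [IsFiniteMeasureOnCompacts μ] {g : Ω → E} {p : ENNReal} (hg : ContinuousOn g s)
    (hs : IsCompact s) (hs_meas : MeasurableSet s) : MemLp g p (μ.restrict s) := by
  have : IsFiniteMeasure (μ.restrict s) := isFiniteMeasure_restrict.2 hs.measure_ne_top
  obtain ⟨C, hC⟩ := hs.exists_bound_of_continuousOn hg
  exact .of_bound (hg.aestronglyMeasurable_of_isCompact hs hs_meas) C
    (ae_restrict_of_forall_mem hs_meas hC)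

theorem pi_cond_eq_cond_univ_pi {ι : Type*} [Fintype ι] {X : ι → Type*}
    {mX : ∀ i, MeasurableSpace (X i)} (μ : ∀ i, Measure (X i)) [∀ i, SigmaFinite (μ i)]
    {s : ∀ i, Set (X i)} (hs₀ : ∀ i, μ i (s i) ≠ 0) (hs : ∀ i, μ i (s i) ≠ ⊤) :
    Measure.pi (fun i ↦ (μ i)[|s i]) = (Measure.pi μ)[|Set.univ.pi s] := by
  have (i : ι) : IsProbabilityMeasure ((μ i)[|s i]) :=
    cond_isProbabilityMeasure_of_finite (hs₀ i) (hs i)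
  refine Measure.pi_eq fun t _ ↦ ?_
  simp only [ProbabilityTheory.cond, Measure.smul_apply, smul_eq_mul, Measure.restrict_pi_pi,
    Measure.pi_pi, Finset.prod_mul_distrib]
  rw [ENNReal.prod_inv_distrib fun i _ j _ _ ↦ .inl (hs₀ i)]

end Cond

section Wirtinger

variable {a b : ℝ}

lemma integral_cond_Icc (hab : a ≤ b) (g : ℝ → ℝ) :
    ∫ t, g t ∂volume[|Set.Icc a b] = (b - a)⁻¹ * ∫ t in a..b, g t := by
  rw [integral_cond, integral_Icc_eq_integral_Ioc, intervalIntegral.integral_of_le hab,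
    volume_real_Icc_of_le hab, smul_eq_mul]

lemma norm_fourierCoeffOn_le_of_hasDerivAt (hab : a < b) {f f' : ℝ → ℂ} {k : ℤ} (hk : k ≠ 0)
    (hf : ContinuousOn f (Set.Icc a b)) (hff' : ∀ t ∈ Set.Ioo a b, HasDerivAt f (f' t) t)
    (hf' : IntervalIntegrable f' volume a b) (h_per : f a = f b) :
    ‖fourierCoeffOn hab f k‖ ≤ (b - a) / (2 * π) * ‖fourierCoeffOn hab f' k‖ := by
  have hk_one : (1 : ℝ) ≤ |(k : ℝ)| := mod_cast Int.one_le_abs hk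
  have hab' : 0 < b - a := sub_pos.2 hab
  have h_norm : ‖(b : ℂ) - a‖ = b - a := by
    rw [← Complex.ofReal_sub, Complex.norm_of_nonneg hab'.le]
  rw [fourierCoeffOn_of_hasDerivAt_Ioo hab hk (by rwa [Set.uIcc_of_le hab.le])
    (by rwa [min_eq_left hab.le, max_eq_right hab.le]) hf', h_per, sub_self, mul_zero, zero_sub]
  calc _ = (b - a) / (2 * π) * ‖fourierCoeffOn hab f' k‖ / |(k : ℝ)| := by
        simp only [one_div, norm_mul, norm_inv, norm_neg, Complex.norm_real,
          Complex.norm_intCast, Complex.norm_I, Complex.norm_ofNat, Real.norm_of_nonneg pi_pos.le,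
          h_norm, mul_one]
        field_simp
    _ ≤ _ := div_le_self (by positivity) hk_one

lemma hasSum_sq_fourierCoeffOn_ofReal (hab : a < b) {g : ℝ → ℝ}
    (hg : MemLp g 2 (volume.restrict (Set.Icc a b))) :
    HasSum (fun k ↦ ‖fourierCoeffOn hab (fun t ↦ (g t : ℂ)) k‖ ^ 2)
      (∫ t, g t ^ 2 ∂volume[|Set.Icc a b]) := by
  rw [← restrict_Ioc_eq_restrict_Icc] at hg
  simpa [integral_cond_Icc hab.le] using hasSum_sq_fourierCoeffOn hab hg.ofReal

lemma hasSum_sq_fourierCoeffOn_variance (hab : a < b) {g : ℝ → ℝ}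
    (hg : MemLp g 2 (volume.restrict (Set.Icc a b))) :
    HasSum (fun k ↦ if k = 0 then 0 else ‖fourierCoeffOn hab (fun t ↦ (g t : ℂ)) k‖ ^ 2)
      Var[g; volume[|Set.Icc a b]] := by
  have h_zero : ‖fourierCoeffOn hab (fun t ↦ (g t : ℂ)) 0‖ ^ 2 =
      (∫ t, g t ∂volume[|Set.Icc a b]) ^ 2 := by
    rw [fourierCoeffOn_eq_integral, integral_cond_Icc hab.le]
    simp [intervalIntegral.integral_ofReal, mul_pow, -Complex.ofReal_sub]
  have : IsProbabilityMeasure (volume[|Set.Icc a b]) :=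
    cond_isProbabilityMeasure_of_finite (by simp [hab]) (by simp)
  rw [variance_eq_sub (memLp_cond_of_memLp_restrict hg (by simp [hab])), ← h_zero]
  exact hasSum_ite_sub_hasSum (hasSum_sq_fourierCoeffOn_ofReal hab hg) 0

theorem variance_cond_Icc_le_integral_sq_deriv (hab : a < b) {g g' : ℝ → ℝ}
    (hg : ContinuousOn g (Set.Icc a b)) (hgg' : ∀ t ∈ Set.Ioo a b, HasDerivAt g (g' t) t)
    (hg' : MemLp g' 2 (volume.restrict (Set.Icc a b))) (h_per : g a = g b) :
    Var[g; volume[|Set.Icc a b]] ≤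
      ((b - a) / (2 * π)) ^ 2 * ∫ t, g' t ^ 2 ∂volume[|Set.Icc a b] := by
  have hg_memLp : MemLp g 2 (volume.restrict (Set.Icc a b)) :=
    memLp_restrict_of_continuousOn_of_isCompact hg isCompact_Icc measurableSet_Icc
  have hg'_int : IntervalIntegrable (fun t ↦ (g' t : ℂ)) volume a b :=
    (intervalIntegrable_iff_integrableOn_Icc_of_le hab.le).2 (hg'.integrable one_le_two).ofReal
  refine hasSum_le (fun k ↦ ?_) (hasSum_sq_fourierCoeffOn_variance hab hg_memLp)
    ((hasSum_sq_fourierCoeffOn_ofReal hab hg').mul_left _)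
  split_ifs with hk
  · positivity
  · rw [← mul_pow]
    gcongr
    exact norm_fourierCoeffOn_le_of_hasDerivAt hab hk
      (Complex.continuous_ofReal.comp_continuousOn hg)
      (fun t ht ↦ (hgg' t ht).ofReal_comp) hg'_int (by rw [h_per])

end Wirtinger

section Box

variable {ι E : Type*} [NormedAddCommGroup E]

lemma hasDerivAt_comp_update [Finite ι] [DecidableEq ι] [NormedSpace ℝ E] {u : (ι → ℝ) → E}
    (hu : Differentiable ℝ u) (x : ι → ℝ) (i : ι) (t : ℝ) :
    HasDerivAt (fun t ↦ u (update x i t)) (fderiv ℝ u (update x i t) (Pi.single i 1)) t := by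
  cases nonempty_fintype ι
  exact (hu _).hasFDerivAt.comp_hasDerivAt t (hasDerivAt_update x i t)

variable [Fintype ι]

lemma volume_box_ne_zero {a b : ι → ℝ} (hab : ∀ i, a i < b i) :
    volume (Set.univ.pi fun i ↦ Set.Icc (a i) (b i)) ≠ 0 := by
  simpa [volume_pi_pi, Finset.prod_eq_zero_iff, -Set.pi_univ_Icc] using hab

lemma not_ae_restrict_box_eq_zero {a b : ι → ℝ} (hab : ∀ i, a i < b i)
    {f : (ι → ℝ) → E} (hf : ∀ x, f x ≠ 0) :
    ¬ f =ᵐ[volume.restrict (Set.univ.pi fun i ↦ Set.Icc (a i) (b i))] 0 := fun h ↦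
  have := ae_restrict_neBot.2 (volume_box_ne_zero hab)
  h.exists.elim hf

lemma memLp_restrict_box {g : (ι → ℝ) → E} (hg : Continuous g) (a b : ι → ℝ) (p : ENNReal) :
    MemLp g p (volume.restrict (Set.univ.pi fun i ↦ Set.Icc (a i) (b i))) :=
  memLp_restrict_of_continuousOn_of_isCompact hg.continuousOn
    (isCompact_univ_pi fun _ ↦ isCompact_Icc) (.univ_pi fun _ ↦ measurableSet_Icc)

theorem variance_cond_box_le_sum_integral_sq_fderiv {n : ℕ} {a b : Fin n → ℝ}
    (hab : ∀ i, a i < b i) {u : (Fin n → ℝ) → ℝ} (hu : ContDiff ℝ 1 u)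
    (hu_per : ∀ x i, u (update x i (a i)) = u (update x i (b i))) :
    Var[u; volume[|Set.univ.pi fun i ↦ Set.Icc (a i) (b i)]] ≤
      ∑ i, ((b i - a i) / (2 * π)) ^ 2 * ∫ x, fderiv ℝ u x (Pi.single i 1) ^ 2
        ∂volume[|Set.univ.pi fun i ↦ Set.Icc (a i) (b i)] := by
  have h_vol (i : Fin n) : volume (Set.Icc (a i) (b i)) ≠ 0 := by simp [hab i]
  have (i : Fin n) : IsProbabilityMeasure (volume[|Set.Icc (a i) (b i)]) :=
    cond_isProbabilityMeasure_of_finite (h_vol i) (by simp)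
  have h_pi : Measure.pi (fun i ↦ volume[|Set.Icc (a i) (b i)]) =
      volume[|Set.univ.pi fun i ↦ Set.Icc (a i) (b i)] :=
    pi_cond_eq_cond_univ_pi _ h_vol (by simp)
  have h_memLp {g : (Fin n → ℝ) → ℝ} (hg : Continuous g) :=
    memLp_cond_of_memLp_restrict (memLp_restrict_box hg a b 2) (volume_box_ne_zero hab)
  have hu' (i : Fin n) : Continuous fun x ↦ fderiv ℝ u x (Pi.single i 1) :=
    (hu.continuous_fderiv one_ne_zero).clm_apply continuous_const
  simp_rw [← integral_const_mul, ← h_pi] at h_memLp ⊢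
  refine variance_pi_le_sum_integral (h_memLp hu.continuous)
    (fun i ↦ (h_memLp (hu' i)).integrable_sq.const_mul _) fun i x ↦ ?_
  rw [integral_const_mul]
  have h_deriv := hasDerivAt_comp_update (hu.differentiable one_ne_zero) x i
  refine variance_cond_Icc_le_integral_sq_deriv (hab i)
    (fun t _ ↦ (h_deriv t).continuousAt.continuousWithinAt) (fun t _ ↦ h_deriv t)
    (memLp_restrict_of_continuousOn_of_isCompact ?_ isCompact_Icc measurableSet_Icc) (hu_per x i)
  exact ((hu' i).comp (continuous_const.update i continuous_id)).continuousOn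

end Box

section Torus

variable {n : ℕ}

lemma update_zero_add_two_pi_smul_single (x : Fin n → ℝ) (i : Fin n) :
    update x i 0 + (2 * π) • (Pi.single i 1 : Fin n → ℝ) = update x i (2 * π) := by
  ext j
  obtain rfl | hj := eq_or_ne j i <;> simp [*]

lemma volume_real_torus :
    volume.real (Set.univ.pi fun _ : Fin n ↦ Set.Icc (0 : ℝ) (2 * π)) = (2 * π) ^ n := by
  simp [measureReal_def, volume_pi_pi, -Set.pi_univ_Icc, pi_pos.le]

theorem variance_cond_torus_le_integral_sum_sq_fderiv {u : (Fin n → ℝ) → ℝ} (hu : ContDiff ℝ 1 u)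
    (hu_per : ∀ (x : Fin n → ℝ) (i : Fin n), u (x + (2 * π) • (Pi.single i 1 : Fin n → ℝ)) = u x) :
    Var[u; volume[|Set.univ.pi fun _ : Fin n ↦ Set.Icc (0 : ℝ) (2 * π)]] ≤
      ((2 * π) ^ n)⁻¹ * ∫ x in Set.univ.pi fun _ : Fin n ↦ Set.Icc (0 : ℝ) (2 * π),
        ∑ i, fderiv ℝ u x (Pi.single i 1) ^ 2 := by
  have h_box := variance_cond_box_le_sum_integral_sq_fderiv (a := fun _ : Fin n ↦ 0)
    (fun _ ↦ two_pi_pos) hu fun x i ↦ by rw [← update_zero_add_two_pi_smul_single, hu_per]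
  have hu' (i : Fin n) : Continuous fun x ↦ fderiv ℝ u x (Pi.single i 1) :=
    (hu.continuous_fderiv one_ne_zero).clm_apply continuous_const
  rw [integral_finsetSum _ fun i _ ↦ (memLp_restrict_box (hu' i) _ _ 2).integrable_sq,
    Finset.mul_sum]
  simpa only [sub_zero, div_self two_pi_pos.ne', one_pow, one_mul, integral_cond,
    volume_real_torus, smul_eq_mul] using h_box

theorem first_f_eigenvalue_lower_bound_torus_general
    (n : ℕ)
    (f u : (Fin n → ℝ) → ℝ)
    (hf : MemLp f 2 (volume.restrict (Set.univ.pi fun _ : Fin n ↦ Set.Icc (0 : ℝ) (2 * π))))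
    (hf_ne : ¬ f =ᵐ[volume.restrict (Set.univ.pi fun _ : Fin n ↦ Set.Icc (0 : ℝ) (2 * π))] 0)
    (hu_C1 : ContDiff ℝ 1 u)
    (hu_per : ∀ (x : Fin n → ℝ) (i : Fin n), u (x + (2 * π) • (Pi.single i 1 : Fin n → ℝ)) = u x)
    (hfu : ∫ x in Set.univ.pi fun _ : Fin n => Set.Icc (0:ℝ) (2 * π), f x * u x = 0) :
    ((∫ x in Set.univ.pi fun _ : Fin n => Set.Icc (0:ℝ) (2 * π), f x) ^ 2 /
        ((2 * π) ^ n *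
          ∫ x in Set.univ.pi fun _ : Fin n => Set.Icc (0:ℝ) (2 * π), (f x) ^ 2)) *
        (∫ x in Set.univ.pi fun _ : Fin n => Set.Icc (0:ℝ) (2 * π), (u x) ^ 2)
      ≤ ∫ x in Set.univ.pi fun _ : Fin n => Set.Icc (0:ℝ) (2 * π),
          ∑ i : Fin n, (fderiv ℝ u x (Pi.single i 1 : Fin n → ℝ)) ^ 2 := by
  set Q : Set (Fin n → ℝ) := Set.univ.pi fun _ ↦ Set.Icc (0 : ℝ) (2 * π)
  have hQ_ne : volume Q ≠ 0 := volume_box_ne_zero fun _ ↦ two_pi_pos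
  have hQ_top : volume Q ≠ ⊤ := (isCompact_univ_pi fun _ ↦ isCompact_Icc).measure_ne_top
  have hQ_real : volume.real Q = (2 * π) ^ n := volume_real_torus
  have : IsProbabilityMeasure (volume[|Q]) := cond_isProbabilityMeasure_of_finite hQ_ne hQ_top
  have hu : MemLp u 2 (volume.restrict Q) := memLp_restrict_box hu_C1.continuous _ _ 2
  have hf_sq : 0 < ∫ x in Q, f x ^ 2 := integral_sq_pos_of_not_ae_eq_zero hf hf_ne
  have h_poincare := variance_cond_torus_le_integral_sum_sq_fderiv hu_C1 hu_per
  have h := (sq_integral_mul_integral_sq_le_of_integral_mul_eq_zero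
    (memLp_cond_of_memLp_restrict hf hQ_ne) (memLp_cond_of_memLp_restrict hu hQ_ne)
    (by rw [integral_cond, hfu, smul_zero])).trans
    (mul_le_mul_of_nonneg_left h_poincare (integral_nonneg fun x ↦ sq_nonneg (f x)))
  simp only [integral_cond, hQ_real, smul_eq_mul] at h
  rw [div_mul_eq_mul_div, div_le_iff₀ (by positivity)]
  field_simp at h
  linarith

end Torus

theorem first_f_eigenvalue_lower_bound_torus
    (n : ℕ) (hn : 1 ≤ n)
    (f u : (Fin n → ℝ) → ℝ)
    (hf_pos : ∀ x, 0 < f x)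
    (hf_cont : Continuous f)
    (hf_per : ∀ (x : Fin n → ℝ) (i : Fin n), f (x + (2 * π) • (Pi.single i 1 : Fin n → ℝ)) = f x)
    (hu_C1 : ContDiff ℝ 1 u)
    (hu_per : ∀ (x : Fin n → ℝ) (i : Fin n), u (x + (2 * π) • (Pi.single i 1 : Fin n → ℝ)) = u x)
    (hfu : ∫ x in Set.univ.pi fun _ : Fin n => Set.Icc (0:ℝ) (2 * π), f x * u x = 0) :
    ((∫ x in Set.univ.pi fun _ : Fin n => Set.Icc (0:ℝ) (2 * π), f x) ^ 2 /
        ((2 * π) ^ n *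
          ∫ x in Set.univ.pi fun _ : Fin n => Set.Icc (0:ℝ) (2 * π), (f x) ^ 2)) *
        (∫ x in Set.univ.pi fun _ : Fin n => Set.Icc (0:ℝ) (2 * π), (u x) ^ 2)
      ≤ ∫ x in Set.univ.pi fun _ : Fin n => Set.Icc (0:ℝ) (2 * π),
          ∑ i : Fin n, (fderiv ℝ u x (Pi.single i 1 : Fin n → ℝ)) ^ 2 := by
  exact first_f_eigenvalue_lower_bound_torus_general n f u (memLp_restrict_box hf_cont _ _ 2)
    (not_ae_restrict_box_eq_zero (fun _ ↦ two_pi_pos) fun x ↦ (hf_pos x).ne') hu_C1 hu_per hfu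
end

section
/- Let f : ℝ → ℝ be a positive continuous 2π-periodic function. Then there exists a 2π-periodic C¹ function u : ℝ → ℝ, not identically zero, such that ∫₀^{2π} f(θ)u(θ) dθ = 0 and ∫₀^{2π} (u'(θ))² dθ ≤ ∫₀^{2π} u(θ)² dθ. -/
open Real

/-!
The first eigenspace of the circle contains every translate `sin (θ - φ)`, and its elements satisfy
the energy inequality with equality. Since `∫ f θ * sin (θ - φ)` is the imaginary part of
`exp (-φ * I) * ∫ f θ * exp (θ * I)`, it vanishes when `φ` is the argument of the Fourier
coefficient `∫ f θ * exp (θ * I)`.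
-/

theorem exists_integral_mul_sin_sub_eq_zero {μ : MeasureTheory.Measure ℝ} {f : ℝ → ℝ} {a b : ℝ}
    (hf : IntervalIntegrable f μ a b) :
    ∃ φ : ℝ, ∫ θ in a..b, f θ * sin (θ - φ) ∂μ = 0 := by
  set C := ∫ θ in a..b, f θ * cos θ ∂μ
  set S := ∫ θ in a..b, f θ * sin θ ∂μ
  set φ := Complex.arg ⟨C, S⟩
  have hC : ‖(⟨C, S⟩ : ℂ)‖ * cos φ = C := Complex.norm_mul_cos_arg _
  have hS : ‖(⟨C, S⟩ : ℂ)‖ * sin φ = S := Complex.norm_mul_sin_arg _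
  have hcos : IntervalIntegrable (fun θ => f θ * cos θ) μ a b :=
    hf.mul_continuousOn continuous_cos.continuousOn
  have hsin : IntervalIntegrable (fun θ => f θ * sin θ) μ a b :=
    hf.mul_continuousOn continuous_sin.continuousOn
  refine ⟨φ, ?_⟩
  calc ∫ θ in a..b, f θ * sin (θ - φ) ∂μ
      = ∫ θ in a..b, (f θ * sin θ * cos φ - f θ * cos θ * sin φ) ∂μ := by
        simp only [sin_sub, mul_sub, mul_assoc]
    _ = S * cos φ - C * sin φ := by
        rw [intervalIntegral.integral_sub (hsin.mul_const _) (hcos.mul_const _),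
          intervalIntegral.integral_mul_const, intervalIntegral.integral_mul_const]
    _ = 0 := by linear_combination sin φ * hC - cos φ * hS

theorem integral_cos_sq_eq_integral_sin_sq_add_int_mul_pi (a : ℝ) (n : ℤ) :
    ∫ θ in a..a + n * π, cos θ ^ 2 = ∫ θ in a..a + n * π, sin θ ^ 2 := by
  have hboundary : sin (a + n * π) * cos (a + n * π) = sin a * cos a := by
    rw [sin_add_int_mul_pi, cos_add_int_mul_pi, mul_mul_mul_comm, ← mul_zpow]
    simp
  rw [← sub_eq_zero, ← intervalIntegral.integral_sub
      (Continuous.intervalIntegrable (by fun_prop) _ _)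
      (Continuous.intervalIntegrable (by fun_prop) _ _),
    integral_cos_sq_sub_sin_sq, hboundary, sub_self]

theorem integral_deriv_sin_sub_sq_eq_integral_sin_sub_sq (φ a : ℝ) (n : ℤ) :
    ∫ θ in a..a + n * π, deriv (fun t => sin (t - φ)) θ ^ 2 =
      ∫ θ in a..a + n * π, sin (θ - φ) ^ 2 := by
  have hderiv : deriv (fun t => sin (t - φ)) = fun θ => cos (θ - φ) := by
    funext θ
    rw [deriv_comp_sub_const, Real.deriv_sin]
  simp only [hderiv]
  rw [intervalIntegral.integral_comp_sub_right (fun θ => cos θ ^ 2),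
    intervalIntegral.integral_comp_sub_right (fun θ => sin θ ^ 2), add_sub_right_comm]
  exact integral_cos_sq_eq_integral_sin_sq_add_int_mul_pi (a - φ) n

theorem first_f_eigenvalue_le_first_eigenvalue_circle_general
    (f : ℝ → ℝ) (hf : IntervalIntegrable f MeasureTheory.volume 0 (2 * π)) :
    ∃ u : ℝ → ℝ, ContDiff ℝ 1 u ∧ (∀ θ, u (θ + 2 * π) = u θ) ∧
      (¬ ∀ θ, u θ = 0) ∧
      (∫ θ in (0:ℝ)..(2 * π), f θ * u θ) = 0 ∧
      (∫ θ in (0:ℝ)..(2 * π), (deriv u θ) ^ 2) ≤ ∫ θ in (0:ℝ)..(2 * π), (u θ) ^ 2 := by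
  obtain ⟨φ, horthogonal⟩ := exists_integral_mul_sin_sub_eq_zero hf
  have hperiodic : Function.Periodic (fun θ => sin (θ - φ)) (2 * π) := sin_periodic.sub_const φ
  have hnonzero : ¬ ∀ θ, sin (θ - φ) = 0 := fun h => by simpa using h (π / 2 + φ)
  have henergy := integral_deriv_sin_sub_sq_eq_integral_sin_sub_sq φ 0 2
  rw [zero_add, Int.cast_ofNat] at henergy
  exact ⟨fun θ => sin (θ - φ), by fun_prop, hperiodic, hnonzero, horthogonal, henergy.le⟩

theorem first_f_eigenvalue_le_first_eigenvalue_circle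
    (f : ℝ → ℝ)
    (hf_pos : ∀ θ, 0 < f θ)
    (hf_cont : Continuous f)
    (hf_per : ∀ θ, f (θ + 2 * π) = f θ) :
    ∃ u : ℝ → ℝ, ContDiff ℝ 1 u ∧ (∀ θ, u (θ + 2 * π) = u θ) ∧
      (¬ ∀ θ, u θ = 0) ∧
      (∫ θ in (0:ℝ)..(2 * π), f θ * u θ) = 0 ∧
      (∫ θ in (0:ℝ)..(2 * π), (deriv u θ) ^ 2) ≤ ∫ θ in (0:ℝ)..(2 * π), (u θ) ^ 2 :=
  first_f_eigenvalue_le_first_eigenvalue_circle_general f (hf_cont.intervalIntegrable 0 (2 * π))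
end

section
/- Let f : ℝ → ℝ be a positive continuous 2π-periodic function such that ∫₀^{2π} f(θ)cos θ dθ ≠ 0 or ∫₀^{2π} f(θ)sin θ dθ ≠ 0 (i.e. f is not orthogonal to the first eigenspace of the circle). Then there exists a 2π-periodic C¹ function u : ℝ → ℝ, not identically zero, such that ∫₀^{2π} f(θ)u(θ) dθ = 0 and ∫₀^{2π} (u'(θ))² dθ < ∫₀^{2π} u(θ)² dθ. -/
open Real

/-! A first eigenfunction `g` has mean zero, so passing from `g` to `c - d * g` multiplies its
Dirichlet energy by `d ^ 2`, while its square integral is multiplied by `d ^ 2` and then increased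
by `c ^ 2` times the length of the circle: for `c ≠ 0` the Rayleigh quotient drops below the
eigenvalue. Taking `c = ∫ f * g` and `d = ∫ f` makes `c - d * g` orthogonal to `f`, and `c ≠ 0` says
exactly that `g` is not orthogonal to `f`. -/

open MeasureTheory

section

variable {a b : ℝ} {f g : ℝ → ℝ}

lemma integral_mul_integral_mul_sub_integral_mul_eq_zero
    (hf : IntervalIntegrable f volume a b)
    (hfg : IntervalIntegrable (fun x ↦ f x * g x) volume a b) :
    ∫ x in a..b, f x * ((∫ y in a..b, f y * g y) - (∫ y in a..b, f y) * g x) = 0 := by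
  set c := ∫ y in a..b, f y * g y
  set d := ∫ y in a..b, f y
  calc ∫ x in a..b, f x * (c - d * g x)
      = ∫ x in a..b, (c * f x - d * (f x * g x)) := by congr 1; ext x; ring
    _ = c * d - d * c := by
        rw [intervalIntegral.integral_sub (hf.const_mul c) (hfg.const_mul d),
          intervalIntegral.integral_const_mul, intervalIntegral.integral_const_mul]
    _ = 0 := by ring

lemma integral_const_sub_const_mul_sq_of_integral_eq_zero
    (hg : IntervalIntegrable g volume a b)
    (hg_sq : IntervalIntegrable (fun x ↦ g x ^ 2) volume a b)
    (hg_mean : ∫ x in a..b, g x = 0) (c d : ℝ) :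
    ∫ x in a..b, (c - d * g x) ^ 2 = (b - a) * c ^ 2 + d ^ 2 * ∫ x in a..b, g x ^ 2 := by
  have expand (x : ℝ) : (c - d * g x) ^ 2 = c ^ 2 - 2 * c * d * g x + d ^ 2 * g x ^ 2 := by ring
  have hconst : IntervalIntegrable (fun _ ↦ c ^ 2) volume a b := intervalIntegrable_const
  have hlin := hg.const_mul (2 * c * d)
  simp only [expand]
  rw [intervalIntegral.integral_add (hconst.sub hlin) (hg_sq.const_mul _),
    intervalIntegral.integral_sub hconst hlin, intervalIntegral.integral_const_mul,
    intervalIntegral.integral_const_mul, intervalIntegral.integral_const, hg_mean,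
    smul_eq_mul, mul_zero, sub_zero]

lemma integral_deriv_const_sub_const_mul_sq (c d : ℝ) :
    ∫ x in a..b, deriv (fun y ↦ c - d * g y) x ^ 2 = d ^ 2 * ∫ x in a..b, deriv g x ^ 2 := by
  simp only [deriv_const_sub, deriv_const_mul_field, neg_sq, mul_pow,
    intervalIntegral.integral_const_mul]

lemma integral_deriv_const_sub_const_mul_sq_lt {c Λ : ℝ} (hab : a < b) (hΛ : 0 < Λ) (hc : c ≠ 0)
    (hg : IntervalIntegrable g volume a b)
    (hg_sq : IntervalIntegrable (fun x ↦ g x ^ 2) volume a b)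
    (hg_mean : ∫ x in a..b, g x = 0)
    (hg_energy : ∫ x in a..b, deriv g x ^ 2 ≤ Λ * ∫ x in a..b, g x ^ 2) (d : ℝ) :
    ∫ x in a..b, deriv (fun y ↦ c - d * g y) x ^ 2 < Λ * ∫ x in a..b, (c - d * g x) ^ 2 := by
  have hgain : 0 < Λ * ((b - a) * c ^ 2) :=
    mul_pos hΛ (mul_pos (sub_pos.mpr hab) (sq_pos_of_ne_zero hc))
  calc ∫ x in a..b, deriv (fun y ↦ c - d * g y) x ^ 2
      = d ^ 2 * ∫ x in a..b, deriv g x ^ 2 := integral_deriv_const_sub_const_mul_sq c d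
    _ ≤ d ^ 2 * (Λ * ∫ x in a..b, g x ^ 2) := by gcongr
    _ < Λ * ((b - a) * c ^ 2) + d ^ 2 * (Λ * ∫ x in a..b, g x ^ 2) := lt_add_of_pos_left _ hgain
    _ = Λ * ∫ x in a..b, (c - d * g x) ^ 2 := by
        rw [integral_const_sub_const_mul_sq_of_integral_eq_zero hg hg_sq hg_mean]
        ring

end

theorem exists_periodic_orthogonal_integral_deriv_sq_lt {f g : ℝ → ℝ} {T Λ : ℝ}
    (hT : 0 < T) (hΛ : 0 < Λ) (hf : IntervalIntegrable f volume 0 T)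
    (hg : ContDiff ℝ 1 g) (hg_per : Function.Periodic g T)
    (hg_mean : ∫ x in 0..T, g x = 0)
    (hg_energy : ∫ x in 0..T, deriv g x ^ 2 ≤ Λ * ∫ x in 0..T, g x ^ 2)
    (hfg : ∫ x in 0..T, f x * g x ≠ 0) :
    ∃ u : ℝ → ℝ, ContDiff ℝ 1 u ∧ Function.Periodic u T ∧ (¬ ∀ x, u x = 0) ∧
      ∫ x in 0..T, f x * u x = 0 ∧
      ∫ x in 0..T, deriv u x ^ 2 < Λ * ∫ x in 0..T, u x ^ 2 := by
  have hg_cont : Continuous g := hg.continuous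
  let u : ℝ → ℝ := fun x ↦ (∫ y in 0..T, f y * g y) - (∫ y in 0..T, f y) * g x
  have hu_energy : ∫ x in 0..T, deriv u x ^ 2 < Λ * ∫ x in 0..T, u x ^ 2 :=
    integral_deriv_const_sub_const_mul_sq_lt hT hΛ hfg (hg_cont.intervalIntegrable 0 T)
      ((hg_cont.pow 2).intervalIntegrable 0 T) hg_mean hg_energy _
  have hu_ne : ¬ ∀ x, u x = 0 := fun hu ↦ by
    simp [show u = fun _ ↦ 0 from funext hu] at hu_energy
  exact ⟨u, contDiff_const.sub (contDiff_const.mul hg), fun x ↦ by simp only [u, hg_per x], hu_ne,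
    integral_mul_integral_mul_sub_integral_mul_eq_zero hf
      (hf.mul_continuousOn hg_cont.continuousOn), hu_energy⟩

theorem first_f_eigenvalue_strictly_less_circle_general
    (f : ℝ → ℝ)
    (hf : IntervalIntegrable f volume 0 (2 * π))
    (hf_not_orth : (∫ θ in (0 : ℝ)..(2 * π), f θ * cos θ) ≠ 0 ∨
      (∫ θ in (0 : ℝ)..(2 * π), f θ * sin θ) ≠ 0) :
    ∃ u : ℝ → ℝ, ContDiff ℝ 1 u ∧ (∀ θ, u (θ + 2 * π) = u θ) ∧
      (¬ ∀ θ, u θ = 0) ∧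
      (∫ θ in (0 : ℝ)..(2 * π), f θ * u θ) = 0 ∧
      (∫ θ in (0 : ℝ)..(2 * π), (deriv u θ) ^ 2) < ∫ θ in (0 : ℝ)..(2 * π), (u θ) ^ 2 := by
  obtain ⟨g, hg, hg_per, hg_mean, hg_energy, hfg⟩ : ∃ g : ℝ → ℝ, ContDiff ℝ 1 g ∧
      Function.Periodic g (2 * π) ∧ ∫ θ in 0..2 * π, g θ = 0 ∧
      ∫ θ in 0..2 * π, deriv g θ ^ 2 = ∫ θ in 0..2 * π, g θ ^ 2 ∧
      ∫ θ in 0..2 * π, f θ * g θ ≠ 0 := by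
    rcases hf_not_orth with hcos | hsin
    · exact ⟨cos, contDiff_cos, cos_periodic, by simp,
        by simp [integral_sin_sq, integral_cos_sq], hcos⟩
    · exact ⟨sin, contDiff_sin, sin_periodic, by simp,
        by simp [integral_sin_sq, integral_cos_sq], hsin⟩
  simpa only [one_mul, Function.Periodic] using
    exists_periodic_orthogonal_integral_deriv_sq_lt two_pi_pos one_pos hf hg hg_per hg_mean
      (by rw [one_mul, hg_energy]) hfg

theorem first_f_eigenvalue_strictly_less_circle
    (f : ℝ → ℝ)
    (hf_pos : ∀ θ, 0 < f θ)
    (hf_cont : Continuous f)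
    (hf_per : ∀ θ, f (θ + 2 * π) = f θ)
    (hf_not_orth : (∫ θ in (0:ℝ)..(2 * π), f θ * Real.cos θ) ≠ 0 ∨
      (∫ θ in (0:ℝ)..(2 * π), f θ * Real.sin θ) ≠ 0) :
    ∃ u : ℝ → ℝ, ContDiff ℝ 1 u ∧ (∀ θ, u (θ + 2 * π) = u θ) ∧
      (¬ ∀ θ, u θ = 0) ∧
      (∫ θ in (0:ℝ)..(2 * π), f θ * u θ) = 0 ∧
      (∫ θ in (0:ℝ)..(2 * π), (deriv u θ) ^ 2) < ∫ θ in (0:ℝ)..(2 * π), (u θ) ^ 2 :=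
  first_f_eigenvalue_strictly_less_circle_general f (hf_cont.intervalIntegrable _ _)
    hf_not_orth
end
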